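/- arXiv:1607.08137 — 2 statements merged into one kernel-verified Lean document; each statement's English description precedes it below -/
import Mathlib

section
/- Take k = 4, n = 7 and the weight vectors (1,1,1,0), (1,1,0,1), (1,0,1,1), (0,1,1,1) each taken twice, together with (1,1,1,1), in the Vandermonde-quotient construction. Then for every δ ≥ 0 the power series F_δ ∈ ℚ[[x₁,…,x₄]] is divisible by Δ = ∏_{1≤i<j≤4}(x_i−x_j), and the resulting series I₀(q) = Σ_{δ≥0} a_δ q^δ with a_δ = (−1)^δ (F_δ/Δ)(0) satisfies {81θ⁴ − 9q(317θ⁴+520θ³+431θ²+171θ+27) + q²(6589θ⁴−7616θ³−31688θ²−28251θ−8370) − q³(5521θ⁴+21384θ³+107223θ²+138402θ+55782) + q⁴(21987θ⁴+130752θ³+152168θ²+9194θ−39016) − 19q⁵(θ+1)(293θ³−7005θ²−18780θ−12535) − 361q⁶(θ+1)(θ+2)(137θ²+357θ+223) − 6859q⁷(θ+1)(θ+2)²(θ+3)} I₀ = 0. -/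
noncomputable section
namespace Stmt12

/-- The multivariable power series ring `ℚ[[x₁,…,x_4]]`. -/
abbrev R := MvPowerSeries (Fin 4) ℚ

/-- The constant `a` in `R`. -/
def Cc (a : ℚ) : R := MvPowerSeries.C a

/-- The pairs `i < j`. -/
def pairs : Finset (Fin 4 × Fin 4) := Finset.univ.filter fun p => p.1 < p.2

/-- The Vandermonde element `Δ = ∏_{i<j}(x_i − x_j)`. -/
def Vand : R := ∏ p ∈ pairs, (MvPowerSeries.X p.1 - MvPowerSeries.X p.2)

/-- The weight vectors. -/
def ws : List (Fin 4 → ℕ) := [![1, 1, 1, 0], ![1, 1, 1, 0], ![1, 1, 0, 1], ![1, 1, 0, 1], ![1, 0, 1, 1], ![1, 0, 1, 1], ![0, 1, 1, 1], ![0, 1, 1, 1], ![1, 1, 1, 1]]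

/-- `n = 7`. -/
def n : ℕ := 7

/-- The term `T_d` of the Vandermonde-quotient construction:
`T_d = ∏_{i<j}(x_i−x_j+d_i−d_j) · ∏_s ∏_{m=1}^{⟨wˢ,d⟩}(⟨wˢ,x⟩+m) · u_d⁻¹`. -/
def T (d : Fin 4 → ℕ) : R :=
  (∏ p ∈ pairs,
      (MvPowerSeries.X p.1 - MvPowerSeries.X p.2 + Cc ((d p.1 : ℚ) - (d p.2 : ℚ)))) *
    (ws.map fun w =>
      ∏ m ∈ Finset.Icc 1 (∑ j, w j * d j),
        ((∑ j, Cc ((w j : ℚ)) * MvPowerSeries.X j) + Cc (m : ℚ))).prod *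
    (∏ j, ∏ m ∈ Finset.Icc 1 (d j), (MvPowerSeries.X j + Cc (m : ℚ)) ^ n)⁻¹

/-- `F_δ = Σ_{d₁+⋯+d_k=δ} T_d`. -/
def F (δ : ℕ) : R :=
  ∑ d ∈ (Fintype.piFinset fun _ : Fin 4 => Finset.range (δ + 1)).filter
      (fun d => ∑ j, d j = δ), T d

/-- The Euler operator `θ = q·d/dq` on `ℚ[[q]]`. -/
def th (f : PowerSeries ℚ) : PowerSeries ℚ :=
  PowerSeries.mk fun d => (d : ℚ) * PowerSeries.coeff d f

section Certificate

variable {A : Type*} [CommRing A]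

/-- The complete homogeneous symmetric polynomials of four quantities with elementary symmetric
polynomials `m, a, b, c`. -/
def hsym (m a b c : A) : ℕ → A
  | 0 => 1
  | 1 => m
  | 2 => m * m - a
  | 3 => m * (m * m - a) - a * m + b
  | k + 4 => m * hsym m a b c (k + 3) - a * hsym m a b c (k + 2) + b * hsym m a b c (k + 1)
      - c * hsym m a b c k

/-- A polynomial of degree at most three, given by its coefficients. -/
structure CubicPoly (A : Type*) where
  c0 : A
  c1 : A
  c2 : A
  c3 : A

/-- The value of a cubic at `y`. -/
def CubicPoly.eval (p : CubicPoly A) (y : A) : A := p.c0 + p.c1 * y + p.c2 * y ^ 2 + p.c3 * y ^ 3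

/-- The coefficient of `q ^ k` in the Picard–Fuchs operator, as a polynomial in `θ = m`. -/
def opCoeff (m : A) : ℕ → A
  | 0 => 81*m^4
  | 1 => -9*(317*m^4 + 520*m^3 + 431*m^2 + 171*m + 27)
  | 2 => 6589*m^4 - 7616*m^3 - 31688*m^2 - 28251*m - 8370
  | 3 => -(5521*m^4 + 21384*m^3 + 107223*m^2 + 138402*m + 55782)
  | 4 => 21987*m^4 + 130752*m^3 + 152168*m^2 + 9194*m - 39016
  | 5 => -19*((m + 1)*(293*m^3 - 7005*m^2 - 18780*m - 12535))
  | 6 => -361*((m + 1)*(m + 2)*(137*m^2 + 357*m + 223))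
  | 7 => -6859*((m + 1)*(m + 2)^2*(m + 3))
  | _ => 0

/-- The telescoping certificate at shift `0`. -/
def cert0 (m a b c : A) : CubicPoly A where
  c0 :=
    514962*m^4*a*b - 1462272*m^4*c - 1021258*m^3*a^3 + 1462272*m^3*a*b - 208479*m^3*a*c
    + 4741734*m^3*b^2 - 8693530*m^2*a^2*b + 2924544*m^2*a*c - 1462272*m^2*b^2 - 9773913*m^2*b*c
    + 6472421*m*a^4 - 2924544*m*a^2*b + 7602133*m*a^2*c + 8885405*m*a*b^2 + 580566*m*c^2
    - 11115504*a^3*b + 2924544*a*b^2 + 1010486*a*b*c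
  c1 :=
    1519616*m^4*a^2 - 1462272*m^3*a^2 + 6546289*m^3*a*b + 1462272*m^3*c - 12100151*m^2*a^3
    + 1462272*m^2*a*b - 6884848*m^2*a*c - 13322601*m^2*b^2 + 2924544*m*a^3 + 22825425*m*a^2*b
    - 4386816*m*a*c + 18064497*m*b*c + 4643083*a^4 - 2924544*a^2*b - 14254523*a^2*c
    - 9895891*a*b^2 + 1462272*b*c - 290283*c^2
  c2 :=
    -501760*m^5*a + 1462272*m^4*a + 301056*m^4*b + 4616192*m^3*a^2 - 1462272*m^3*b
    - 290364*m^3*c - 2924544*m^2*a^2 - 17754451*m^2*a*b + 1462272*m^2*c + 1824802*m*a^3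
    + 2924544*m*a*b + 16982091*m*a*c + 13322763*m*b^2 - 6469019*a^2*b - 8881842*b*c
  c3 :=
    501760*m^4*a - 1462272*m^3*a - 301056*m^3*b - 5634129*m^2*a^2 + 1462272*m^2*b + 290364*m^2*c
    + 2924544*m*a^2 + 9890546*m*a*b - 1462272*m*c + 4644217*a^3 - 2924544*a*b - 9096802*a*c
    - 4440921*b^2

/-- The telescoping certificate at shift `1`. -/
def cert1 (m a b c : A) : CubicPoly A where
  c0 :=
    -1997232*m^4*a^2 - 593130*m^4*a*b - 144*m^4*b + 499285*m^4*c + 3714692*m^3*a^3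
    - 3600*m^3*a^2 + 2975465*m^3*a*b + 627060*m^3*a*c - 1225943*m^3*b^2 + 144*m^3*c
    - 2079*m^2*a^3 - 19770936*m^2*a^2*b + 7200*m^2*a*b + 2857444*m^2*a*c - 961601*m^2*b^2
    + 2542534*m^2*b*c + 4048176*m*a^4 - 432*m*a^3 - 1923895*m*a^2*b + 10559025*m*a^2*c
    + 5784571*m*a*b^2 - 3024*m*a*c - 1471974*m*b*c + 118311*m*c^2 - 7477358*a^3*b + 288*a^2*b
    + 1925974*a*b^2 + 1028882*a*b*c - 1728*b*c
  c1 :=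
    2510377*m^3*a^2 - 2439844*m^3*a*b + 144*m^3*b - 499285*m^3*c - 21411709*m^2*a^3
    + 6624*m^2*a^2 - 3996211*m^2*a*b + 2156758*m^2*a*c + 4258917*m^2*b^2 - 144*m^2*c
    + 1928053*m*a^3 + 38496835*m*a^2*b - 11952*m*a*b - 2360931*m*a*c + 1469202*m*b^2
    - 5489522*m*b*c + 3429182*a^4 + 144*a^3 - 1928053*a^2*b - 10075274*a^2*c - 6813453*a*b^2
    + 2592*a*c + 1728*b^2 + 964373*b*c - 204297*c^2
  c2 :=
    -288*m^3*a + 11088*m^3*b + 83052*m^3*c - 1949536*m^2*a^2 + 4860302*m^2*a*b + 2592*m^2*b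
    - 2772*m^2*c + 19462450*m*a^3 - 4608*m*a^2 + 1943992*m*a*b - 5598502*m*a*c - 4553862*m*b^2
    - 864*m*c - 18180768*a^2*b + 3456*a*b + 3035908*b*c
  c3 :=
    -2934*m^2*a^2 + 288*m^2*a - 11088*m^2*b - 83052*m^2*c + 1932904*m*a^2 - 1821460*m*a*b
    - 2592*m*b + 2772*m*c - 1281682*a^3 + 1152*a^2 - 1927360*a*b + 2725764*a*c + 1517954*b^2
    + 864*c

/-- The telescoping certificate at shift `2`. -/
def cert2 (m a b c : A) : CubicPoly A where
  c0 :=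
    -863083*m^4*a^2 - 523916*m^4*a*b + 3184*m^4*b + 472631*m^4*c + 3348267*m^3*a^3
    + 76144*m^3*a^2 + 1293159*m^3*a*b + 544881*m^3*a*c - 1094283*m^3*b^2 - 3184*m^3*c
    + 8220*m^2*a^3 - 13038153*m^2*a^2*b - 152000*m^2*a*b + 2027163*m^2*a*c - 495836*m^2*b^2
    + 2465069*m^2*b*c + 1899506*m*a^4 + 9120*m*a^3 - 988932*m*a^2*b + 6834281*m*a^2*c
    + 3036714*m*a*b^2 + 63696*m*a*c - 924627*m*b*c - 211373*m*c^2 - 4240960*a^3*b - 6080*a^2*b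
    + 980712*a*b^2 + 945052*a*b*c + 36480*b*c
  c1 :=
    1280914*m^3*a^2 - 2182011*m^3*a*b - 3184*m^3*b - 472631*m^3*c - 14955427*m^2*a^3
    - 140128*m^2*a^2 - 2150741*m^2*a*b + 1566110*m^2*a*c + 3800210*m^2*b^2 + 3184*m^2*c
    + 972492*m*a^3 + 25590365*m*a^2*b + 252464*m*a*b - 1543572*m*a*c + 935587*m*b^2
    - 4963161*m*b*c + 2341454*a^4 - 3040*a^3 - 972492*a^2*b - 6404734*a^2*c - 3981766*a*b^2
    - 54720*a*c - 36480*b^2 + 484876*b*c + 3538*c^2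
  c2 :=
    6080*m^3*a - 43840*m^3*b + 198312*m^3*c - 887552*m^2*a^2 + 4316775*m^2*a*b - 54720*m^2*b
    + 10960*m^2*c + 13074320*m*a^3 + 97280*m*a^2 + 909472*m*a*b - 4567735*m*a*c - 4073175*m*b^2
    + 18240*m*c - 12036707*a^2*b - 72960*a*b + 2715450*b*c
  c3 :=
    -9523*m^2*a^2 - 6080*m^2*a + 43840*m^2*b - 198312*m^2*c + 953312*m*a^2 - 1591802*m*a*b
    + 54720*m*b - 10960*m*c - 1037613*a^3 - 24320*a^2 - 975232*a*b + 2239386*a*c + 1357725*b^2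
    - 18240*c

/-- The telescoping certificate at shift `3`. -/
def cert3 (m a b c : A) : CubicPoly A where
  c0 :=
    136492*m^4*a^2 - 332500*m^4*a*b - 7600*m^4*b + 352530*m^4*c + 2894464*m^3*a^3
    - 117040*m^3*a^2 - 235254*m^3*a*b + 135968*m^3*a*c - 979910*m^3*b^2 + 7600*m^3*c
    + 32262*m^2*a^3 - 7372848*m^2*a^2*b + 228000*m^2*a*b + 1328332*m^2*a*c - 159334*m^2*b^2
    + 2322564*m^2*b*c + 343672*m*a^4 - 13680*m*a^3 - 307914*m*a^2*b + 3426882*m*a^2*c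
    + 1048382*m*a*b^2 - 92720*m*a*c - 339800*m*b*c - 255242*m*c^2 - 1616140*a^3*b + 9120*a^2*b
    + 275652*a*b^2 + 572964*a*b*c - 54720*b*c
  c1 :=
    958*m^3*a^2 - 2048896*m^3*a*b + 7600*m^3*b - 352530*m^3*c - 9383010*m^2*a^3 + 215840*m^2*a^2
    - 125678*m^2*a*b + 1913004*m^2*a*c + 3361306*m^2*b^2 - 7600*m^2*c + 243390*m*a^3
    + 14434358*m*a^2*b - 381520*m*a*b - 932786*m*a*c + 382816*m*b^2 - 4578108*m*b*c
    + 1272468*a^4 + 4560*a^3 - 243390*a^2*b - 3078076*a^2*c - 1621346*a*b^2 + 82080*a*c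
    + 54720*b^2 + 116318*b*c + 129390*c^2
  c2 :=
    -9120*m^3*a - 172064*m^3*b + 110808*m^3*c + 89984*m^2*a^2 + 3985300*m^2*a*b + 82080*m^2*b
    + 43016*m^2*c + 7729444*m*a^3 - 145920*m*a^2 - 3952*m*a*b - 4170436*m*a*c - 3594660*m*b^2
    - 27360*m*c - 6837352*a^2*b + 109440*a*b + 2396440*b*c
  c3 :=
    -15044*m^2*a^2 + 9120*m^2*a + 172064*m^2*b - 110808*m^2*c + 168112*m*a^2 - 1573816*m*a*b
    - 82080*m*b - 43016*m*c - 892092*a^3 + 36480*a^2 - 254144*a*b + 1980568*a*c + 1198220*b^2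
    + 27360*c

/-- The telescoping certificate at shift `4`. -/
def cert4 (m a b c : A) : CubicPoly A where
  c0 :=
    393566*m^4*a^2 + 3610*m^4*a*b + 4560*m^4*b + 130606*m^4*c + 2028972*m^3*a^3 + 4560*m^3*a^2
    - 545186*m^3*a*b - 374205*m^3*a*c - 730816*m^3*b^2 - 4560*m^3*c + 21660*m^2*a^3
    - 3337540*m^2*a^2*b + 640338*m^2*a*c - 21660*m^2*b^2 + 1652449*m^2*b*c - 198911*m*a^4
    - 36100*m*a^2*b + 825759*m*a^2*c + 150537*m*a*b^2 - 4560*m*a*c - 36746*m*b*c + 36252*m*c^2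
    - 161728*a^3*b + 14440*a*b^2 + 126350*a*b*c
  c1 :=
    -407360*m^3*a^2 - 1642645*m^3*a*b - 4560*m^3*b - 130606*m^3*c - 4955181*m^2*a^3
    - 9120*m^2*a^2 + 515014*m^2*a*b + 2372796*m^2*a*c + 2369851*m^2*b^2 + 4560*m^2*c
    - 7220*m*a^3 + 6390099*m*a^2*b + 4560*m*a*b - 480852*m*a*c + 65626*m*b^2 - 3374305*m*b*c
    + 360639*a^4 + 7220*a^2*b - 684095*a^2*c - 276887*a*b^2 - 7220*b*c + 46569*c^2
  c2 :=
    -115520*m^3*b - 119852*m^3*c + 231040*m^2*a^2 + 2973291*m^2*a*b + 28880*m^2*c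
    + 3796162*m*a^3 - 173280*m*a*b - 3519123*m*a*c - 2514099*m*b^2 - 3067873*a^2*b + 1676066*b*c
  c3 :=
    -37031*m^2*a^2 + 115520*m^2*b + 119852*m^2*c - 57760*m*a^2 - 1260194*m*a*b - 28880*m*c
    - 728289*a^3 + 1566322*a*c + 838033*b^2

/-- The telescoping certificate at shift `5`. -/
def cert5 (m a b c : A) : CubicPoly A where
  c0 :=
    322012*m^4*a^2 + 178334*m^4*a*b + 361*m^4*c + 602148*m^3*a^3 - 466051*m^3*a*b
    - 330676*m^3*a*c - 252339*m^3*b^2 + 20577*m^2*a^3 - 791312*m^2*a^2*b + 309016*m^2*a*c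
    - 20577*m^2*b^2 + 533558*m^2*b*c - 34295*m*a^2*b - 35739*m*a^2*c + 34295*m*a*b^2
    + 88806*m*b*c + 32851*m*c^2 - 13718*a^3*b + 13718*a*b^2 - 13718*a*b*c
  c1 :=
    -458831*m^3*a^2 - 599260*m^3*a*b - 361*m^3*c - 1415481*m^2*a^3 + 684817*m^2*a*b
    + 998526*m^2*a*c + 673265*m^2*b^2 - 6859*m*a^3 + 1590927*m*a^2*b - 281219*m*a*c
    - 61370*m*b^2 - 994194*m*b*c + 13718*a^4 + 6859*a^2*b - 41154*a^2*c - 20577*a*b^2 - 6859*b*c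
    + 6859*c^2
  c2 :=
    -109744*m^3*b - 82308*m^3*c + 219488*m^2*a^2 + 859902*m^2*a*b + 27436*m^2*c + 968202*m*a^3
    - 164616*m*a*b - 1134262*m*a*c - 695286*m*b^2 - 736440*a^2*b + 463524*b*c
  c3 :=
    -42598*m^2*a^2 + 109744*m^2*b + 82308*m^2*c - 54872*m*a^2 - 353780*m*a*b - 27436*m*c
    - 231762*a^3 + 463524*a*c + 231762*b^2

/-- The telescoping certificate at shift `6`. -/
def cert6 (m a b c : A) : CubicPoly A where
  c0 :=
    -6859*m^4*a^2 + 6859*m^4*c + 6859*m^3*a^3 + 6859*m^3*a*b + 6859*m^3*a*c - 6859*m^3*b^2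
    - 20577*m^2*a^2*b + 6859*m^2*a*c + 6859*m^2*b*c + 6859*m*a^2*c - 6859*m*b*c + 6859*m*c^2
  c1 :=
    13718*m^3*a^2 - 20577*m^3*a*b - 6859*m^3*c - 20577*m^2*a^3 - 20577*m^2*a*b + 13718*m^2*a*c
    + 27436*m^2*b^2 + 34295*m*a^2*b + 6859*m*b^2 - 34295*m*b*c
  c2 :=
    20577*m^2*a*b + 27436*m*a^3 - 20577*m*a*c - 20577*m*b^2 - 20577*a^2*b + 13718*b*c
  c3 :=
    6859*m^2*a^2 - 13718*m*a*b - 6859*a^3 + 13718*a*c + 6859*b^2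

/-- The reduction of `cert0` at `y + 1` modulo the quartic of `y`. -/
def shifted0 (m a b c : A) : CubicPoly A where
  c0 :=
    -3402*m^6 - 11340*m^5*a + 514962*m^5*b - 3888*m^5 - 1029196*m^4*a^2 + 514962*m^4*a*b
    - 6156*m^4*a + 5184*m^4*b - 1470047*m^4*c - 2187*m^4 - 1021258*m^3*a^3 - 1782*m^3*a^2
    + 1956338*m^3*a*b - 208479*m^3*a*c - 1863*m^3*a + 4741734*m^3*b^2 + 1701*m^3*b + 10368*m^3*c
    - 648*m^3 + 2032229*m^2*a^3 - 8693530*m^2*a^2*b - 243*m^2*a^2 + 486*m^2*a*b + 445957*m^2*a*c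
    - 243*m^2*a - 1448179*m^2*b^2 - 9773913*m^2*b*c + 243*m^2*b + 6966*m^2*c - 81*m^2
    + 6472421*m*a^4 - 5459748*m*a^2*b + 7602133*m*a^2*c + 8885405*m*a*b^2 + 7776*m*a*c
    + 1997806*m*b*c + 580566*m*c^2 + 2025*m*c - 11115504*a^3*b + 505243*a^2*c + 2924544*a*b^2
    + 1010486*a*b*c + 648*a*c - 1944*b*c - 505243*c^2 + 243*c
  c1 :=
    1134*m^6 + 1520750*m^5*a + 11016*m^5 + 1519616*m^4*a^2 + 36612*m^4*a - 3050733*m^4*b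
    + 10368*m^4 - 3939805*m^3*a^2 + 6546289*m^3*a*b + 15957*m^3*a - 26487*m^3*b + 3989780*m^3*c
    + 5103*m^3 - 12100151*m^2*a^3 + 4131*m^2*a^2 + 7501855*m^2*a*b - 6884848*m^2*a*c
    + 4131*m^2*a - 13322601*m^2*b^2 - 11097*m^2*b - 5508*m^2*c + 1377*m^2 + 1395290*m*a^3
    + 22825425*m*a^2*b + 486*m*a^2 - 8748*m*a*b - 4921218*m*a*c + 486*m*a - 2025992*m*b^2
    + 18064497*m*b*c - 2511*m*b - 2025*m*c + 162*m + 4643083*a^4 - 894583*a^2*b - 14254523*a^2*c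
    - 9895891*a*b^2 - 648*a*b - 1296*a*c + 1944*b^2 + 967559*b*c - 243*b - 290283*c^2 - 243*c
  c2 :=
    -501760*m^6 - 501760*m^5*a - 8262*m^5 + 913858*m^4*a + 301056*m^4*b - 17010*m^4
    + 4616192*m^3*a^2 - 36531*m^3*a + 591745*m^3*b - 290364*m^3*c - 10854*m^3 + 611424*m^2*a^2
    - 17754451*m^2*a*b - 7371*m^2*a + 24219*m^2*b - 1057703*m^2*c - 3888*m^2 + 1824802*m*a^3
    + 4860*m*a^2 - 3147438*m*a*b + 16982091*m*a*c - 648*m*a + 13322763*m*b^2 + 5184*m*b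
    + 1053*m*c - 810*m + 2268*a^3 - 6469019*a^2*b + 405*a^2 - 162*a*b + 1017613*a*c
    + 1014049*b^2 - 8881842*b*c + 486*b + 243*c - 81
  c3 :=
    501760*m^5 + 501760*m^4*a + 7128*m^4 - 1932848*m^3*a - 301056*m^3*b + 9396*m^3
    - 5634129*m^2*a^2 + 17253*m^2*a + 1442266*m^2*b + 290364*m^2*c + 4374*m^2 + 1405172*m*a^2
    + 9890546*m*a*b + 2754*m*a - 8910*m*b - 960270*m*c + 972*m + 4644217*a^3 - 729*a^2
    - 898228*a*b - 9096802*a*c + 162*a - 4440921*b^2 - 972*b + 81*c + 81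

/-- The reduction of `cert1` at `y + 1` modulo the quartic of `y`. -/
def shifted1 (m a b c : A) : CubicPoly A where
  c0 :=
    1717460*m^6 + 6556482*m^5*a - 593130*m^5*b - 11703687*m^5 + 8553714*m^4*a^2 - 593130*m^4*a*b
    - 47188713*m^4*a - 20481634*m^4*b + 1126345*m^4*c - 9225266*m^4 + 3714692*m^3*a^3
    - 54606945*m^3*a^2 - 43203597*m^3*a*b + 627060*m^3*a*c - 25305217*m^3*a - 1225943*m^3*b^2
    + 7519198*m^3*b + 15860133*m^3*c - 23132*m^3 - 13847944*m^2*a^3 - 19770936*m^2*a^2*b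
    - 16471552*m^2*a^2 + 11913518*m^2*a*b + 27846554*m^2*a*c + 169061*m^2*a + 7946592*m^2*b^2
    + 2542534*m^2*b*c + 3897665*m^2*b - 9355585*m^2*c + 492859*m^2 + 4048176*m*a^4 - 432*m*a^3
    - 3272839*m*a^2*b + 10559025*m*a^2*c + 5784571*m*a*b^2 - 12350145*m*a*c + 1185818*m*b*c
    + 118311*m*c^2 - 2763155*m*c - 7477358*a^3*b + 288*a^2*b + 5773081*a^2*c + 1925974*a*b^2
    + 1028882*a*b*c - 12015099*a*c - 991805*b*c - 804724*c^2 + 2042571*c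
  c1 :=
    593130*m^6 + 593130*m^5*a - 4442965*m^5 - 36650463*m^4*a + 605172*m^4*b + 42185016*m^4
    - 56164794*m^3*a^2 - 2439844*m^3*a*b + 116978758*m^3*a + 69323979*m^3*b - 1262965*m^3*c
    + 37097250*m^3 - 21411709*m^2*a^3 + 102999820*m^2*a^2 + 114212731*m^2*a*b + 2156758*m^2*a*c
    + 72886834*m^2*a + 4258917*m^2*b^2 - 1512902*m^2*b - 49464626*m^2*c + 3024336*m^2
    + 30968727*m*a^3 + 38496835*m*a^2*b + 32943104*m*a^2 - 11477467*m*a*b - 61045085*m*a*c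
    - 338122*m*a - 19004976*m*b^2 - 5489522*m*b*c - 5032175*m*b + 5362437*m*c - 985718*m
    + 3429182*a^4 + 144*a^3 - 6352190*a^2*b - 10075274*a^2*c - 6813453*a*b^2 + 12015099*a*b
    + 27216*a*c + 991805*b^2 + 827929*b*c - 2042571*b - 204297*c^2 + 8370*c
  c2 :=
    1153986*m^5 + 2473774*m^4*a + 10393791*m^4 + 63597531*m^3*a - 1115952*m^3*b + 83052*m^3*c
    - 46504186*m^3 + 72949525*m^2*a^2 + 4860302*m^2*a*b - 87064770*m^2*a - 71514127*m^2*b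
    + 427594*m^2*c - 48561273*m^2 + 19462450*m*a^3 - 54528086*m*a^2 - 84572980*m*a*b
    - 5598502*m*a*c - 72621172*m*a - 4553862*m*b^2 - 6183057*m*b + 44311483*m*c - 5979276*m
    - 9421728*a^3 - 18180768*a^2*b - 28486651*a^2 + 10895073*a*b + 29209748*a*c + 2211632*a
    + 9849361*b^2 + 3035908*b*c + 3889295*b - 2667093*c + 492859
  c3 :=
    -1747116*m^4 - 3066904*m^3*a - 7668286*m^3 - 2934*m^2*a^2 - 35843796*m^2*a + 1103910*m^2*b
    - 83052*m^2*c + 16022857*m^2 - 28522504*m*a^2 - 1821460*m*a*b + 10614484*m*a + 25012028*m*b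
    - 290974*m*c + 20689289*m - 1281682*a^3 - 6187718*a^2 + 17956928*a*b + 2725764*a*c
    + 22284770*a + 1517954*b^2 + 6837002*b - 13047236*c + 2978072

/-- The reduction of `cert2` at `y + 1` modulo the quartic of `y`. -/
def shifted2 (m a b c : A) : CubicPoly A where
  c0 :=
    2485184*m^6 + 7794719*m^5*a - 523916*m^5*b - 5098174*m^5 + 8657802*m^4*a^2 - 523916*m^4*a*b
    - 27319227*m^4*a - 15001973*m^4*b + 1017512*m^4*c - 3691168*m^4 + 3348267*m^3*a^3
    - 35560561*m^3*a^2 - 30704507*m^3*a*b + 544881*m^3*a*c - 14246316*m^3*a - 1094283*m^3*b^2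
    + 4129079*m^3*b + 10585395*m^3*c + 1023527*m^3 - 10342535*m^2*a^3 - 13038153*m^2*a^2*b
    - 10490215*m^2*a^2 + 8009381*m^2*a*b + 18591836*m^2*a*c + 702368*m^2*a + 5523308*m^2*b^2
    + 2465069*m^2*b*c + 2273369*m^2*b - 7116020*m^2*c + 489124*m^2 + 1899506*m*a^4 + 9120*m*a^3
    - 1290044*m*a^2*b + 6834281*m*a^2*c + 3036714*m*a*b^2 - 9027662*m*a*c + 1156043*m*b*c
    - 211373*m*c^2 - 2363319*m*c - 4240960*a^3*b - 6080*a^2*b + 3893733*a^2*c + 980712*a*b^2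
    + 945052*a*b*c - 8303783*a*c - 442066*b*c - 676823*c^2 + 1248798*c
  c1 :=
    523916*m^6 + 523916*m^5*a - 5973663*m^5 - 32094108*m^4*a + 530471*m^4*b + 22308714*m^4
    - 43318907*m^3*a^2 - 2182011*m^3*a*b + 69791651*m^3*a + 49950597*m^3*b - 1321535*m^3*c
    + 19526744*m^3 - 14955427*m^2*a^3 + 67248445*m^2*a^2 + 80591556*m^2*a*b + 1566110*m^2*a*c
    + 43422628*m^2*a + 3800210*m^2*b^2 + 1535201*m^2*b - 34538442*m^2*c - 160416*m^2
    + 21975114*m*a^3 + 25590365*m*a^2*b + 20980430*m*a^2 - 6978940*m*a*b - 42486252*m*a*c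
    - 1404736*m*a - 13183371*m*b^2 - 4963161*m*b*c - 2183419*m*b + 3619344*m*c - 978248*m
    + 2341454*a^4 - 3040*a^3 - 4565113*a^2*b - 6404734*a^2*c - 3981766*a*b^2 + 8303783*a*b
    - 38000*a*c + 442066*b^2 + 483627*b*c - 1248798*b + 3538*c^2 - 55782*c
  c2 :=
    1057408*m^5 + 2202976*m^4*a + 9867323*m^4 + 47851944*m^3*a - 868971*m^3*b + 198312*m^3*c
    - 26903805*m^3 + 51359837*m^2*a^2 + 4316775*m^2*a*b - 54558985*m^2*a - 50330192*m^2*b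
    + 684287*m^2*c - 29228782*m^2 + 13074320*m*a^3 - 36861109*m*a^2 - 58688120*m*a*b
    - 4567735*m*a*c - 46469627*m*a - 4073175*m*b^2 - 4844943*m*b + 31092442*m*c - 2749749*m
    - 6758134*a^3 - 12036707*a^2*b - 18793998*a^2 + 7593155*a*b + 20383715*a*c + 1951166*a
    + 6697216*b^2 + 2715450*b*c + 2329151*b - 1878873*c + 489124
  c3 :=
    -1581324*m^4 - 2726892*m^3*a - 6378844*m^3 - 9523*m^2*a^2 - 25657795*m^2*a + 862416*m^2*b
    - 198312*m^2*c + 9693265*m^2 - 19532610*m*a^2 - 1591802*m*a*b + 6711012*m*a + 17486808*m*b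
    - 380264*m*c + 13393206*m - 1037613*a^3 - 3892437*a^2 + 12597796*a*b + 2239386*a*c
    + 14874214*a + 1357725*b^2 + 4556212*b - 9244635*c + 1886638

/-- The reduction of `cert3` at `y + 1` modulo the quartic of `y`. -/
def shifted3 (m a b c : A) : CubicPoly A where
  c0 :=
    3030956*m^6 + 8623876*m^5*a - 332500*m^5*b + 106202*m^5 + 8487384*m^4*a^2 - 332500*m^4*a*b
    - 10762206*m^4*a - 10506100*m^4*b + 488498*m^4*c + 309556*m^4 + 2894464*m^3*a^3
    - 18849906*m^3*a^2 - 20183698*m^3*a*b + 135968*m^3*a*c - 5388522*m^3*a - 979910*m^3*b^2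
    + 1062036*m^3*b + 6039718*m^3*c + 1398572*m^3 - 6665516*m^2*a^3 - 7372848*m^2*a^2*b
    - 5254652*m^2*a^2 + 4600064*m^2*a*b + 10723184*m^2*a*c + 861354*m^2*a + 3633188*m^2*b^2
    + 2322564*m^2*b*c + 811494*m^2*b - 4840858*m^2*c + 360742*m^2 + 343672*m*a^4 - 13680*m*a^3
    + 55974*m*a^2*b + 3426882*m*a^2*c + 1048382*m*a*b^2 - 6026374*m*a*c + 827096*m*b*c
    - 255242*m*c^2 - 1444478*m*c - 1616140*a^3*b + 9120*a^2*b + 2004770*a^2*c + 275652*a*b^2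
    + 572964*a*b*c - 4892238*a*c + 66986*b*c - 282944*c^2 + 813722*c
  c1 :=
    332500*m^6 + 332500*m^5*a - 7343830*m^5 - 27672110*m^4*a + 243424*m^4*b + 5501728*m^4
    - 31643480*m^3*a^2 - 2048896*m^3*a*b + 29737100*m^3*a + 33070622*m^3*b - 565634*m^3*c
    + 5304720*m^3 - 9383010*m^2*a^3 + 35894428*m^2*a^2 + 51631318*m^2*a*b + 1913004*m^2*a*c
    + 18963424*m^2*a + 3361306*m^2*b^2 + 3802024*m^2*b - 20924512*m^2*c - 2026548*m^2
    + 13275058*m*a^3 + 14434358*m*a^2*b + 10509304*m*a^2 - 3191994*m*a*b - 25694774*m*a*c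
    - 1722708*m*a - 8369124*m*b^2 - 4578108*m*b*c - 178510*m*b + 2591674*m*c - 721484*m
    + 1272468*a^4 + 4560*a^3 - 2612048*a^2*b - 3078076*a^2*c - 1621346*a*b^2 + 4892238*a*b
    - 4560*a*c - 66986*b^2 + 173998*b*c - 813722*b + 129390*c^2 + 39016*c
  c2 :=
    892484*m^5 + 1852364*m^4*a + 9144410*m^4 + 34093650*m^3*a - 497736*m^3*b + 110808*m^3*c
    - 9916600*m^3 + 32971802*m^2*a^2 + 3985300*m^2*a*b - 25835768*m^2*a - 31722570*m^2*b
    + 238956*m^2*c - 12351830*m^2 + 7729444*m*a^3 - 21238152*m*a^2 - 36533432*m*a*b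
    - 4170436*m*a*c - 23205760*m*a - 3594660*m*b^2 - 3700114*m*b + 19205026*m*c - 142620*m
    - 4329120*a^3 - 6837352*a^2*b - 10146890*a^2 + 4689850*a*b + 12461520*a*c + 1675076*a
    + 4017786*b^2 + 2396440*b*c + 772478*b - 1300434*c + 360742
  c3 :=
    -1224984*m^4 - 2184864*m^3*a - 4831536*m^3 - 15044*m^2*a^2 - 16602900*m^2*a + 586812*m^2*b
    - 110808*m^2*c + 4308670*m^2 - 12042832*m*a^2 - 1573816*m*a*b + 3311256*m*a + 10715532*m*b
    - 161820*m*c + 6737554*m - 892092*a^3 - 1837304*a^2 + 8031088*a*b + 1980568*a*c + 8225396*a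
    + 1198220*b^2 + 2385672*b - 5877716*c + 770596

/-- The reduction of `cert4` at `y + 1` modulo the quartic of `y`. -/
def shifted4 (m a b c : A) : CubicPoly A where
  c0 :=
    2422538*m^6 + 6877658*m^5*a + 3610*m^5*b + 2125948*m^5 + 6484092*m^4*a^2 + 3610*m^4*a*b
    - 498902*m^4*a - 5749970*m^4*b - 243599*m^4*c + 1508429*m^4 + 2028972*m^3*a^3
    - 6141104*m^3*a^2 - 10684308*m^3*a*b - 374205*m^3*a*c - 289047*m^3*a - 730816*m^3*b^2
    - 654493*m^3*b + 2271146*m^3*c + 833986*m^3 - 2979789*m^2*a^3 - 3337540*m^2*a^2*b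
    - 1539893*m^2*a^2 + 1626172*m^2*a*b + 4519929*m^2*a*c + 561165*m^2*a + 1958729*m^2*b^2
    + 1652449*m^2*b*c - 50255*m^2*b - 2253818*m^2*c + 117895*m^2 - 198911*m*a^4 + 320568*m*a^2*b
    + 825759*m*a^2*c + 150537*m*a*b^2 - 2954576*m*a*c + 486400*m*b*c + 36252*m*c^2 - 160645*m*c
    - 161728*a^3*b + 466925*a^2*c + 14440*a*b^2 + 126350*a*b*c - 1886966*a*c + 382584*b*c
    + 66215*c^2 + 603459*c
  c1 :=
    -3610*m^6 - 3610*m^5*a - 6730218*m^5 - 19733780*m^4*a - 184623*m^4*b - 4214124*m^4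
    - 19290719*m^3*a^2 - 1642645*m^3*a*b + 2951251*m^3*a + 17360851*m^3*b + 604390*m^3*c
    - 2352789*m^3 - 4955181*m^2*a^3 + 11904089*m^2*a^2 + 26822471*m^2*a*b + 2372796*m^2*a*c
    + 3187383*m^2*a + 2369851*m^2*b^2 + 3825365*m^2*b - 9237876*m^2*c - 1827059*m^2
    + 5639010*m*a^3 + 6390099*m*a^2*b + 3079786*m*a^2 - 297768*m*a*b - 11625302*m*a*c
    - 1122330*m*a - 4418298*m*b^2 - 3374305*m*b*c + 261155*m*b + 1650663*m*c - 235790*m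
    + 360639*a^4 - 816373*a^2*b - 684095*a^2*c - 276887*a*b^2 + 1886966*a*b - 382584*b^2
    - 45999*b*c - 603459*b + 46569*c^2 + 238165*c
  c2 :=
    675450*m^5 + 1272050*m^4*a + 7323816*m^4 + 20631017*m^3*a - 48469*m^3*b - 119852*m^3*c
    + 1972884*m^3 + 17398034*m^2*a^2 + 2973291*m^2*a*b - 4244809*m^2*a - 16028001*m^2*b
    - 643929*m^2*c - 423168*m^2 + 3796162*m*a^3 - 8339442*m*a^2 - 18462414*m*a*b - 3519123*m*a*c
    - 5668270*m*a - 2514099*m*b^2 - 2830278*m*b + 9167709*m*c + 1152160*m - 2177856*a^3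
    - 3067873*a^2*b - 3426859*a^2 + 2008756*a*b + 5807027*a*c + 1164624*a + 1952953*b^2
    + 1676066*b*c - 288420*b - 527839*c + 117895
  c3 :=
    -671840*m^4 - 1268440*m^3*a - 3016136*m^3 - 37031*m^2*a^2 - 8443125*m^2*a + 229482*m^2*b
    + 119852*m^2*c + 115292*m^2 - 5955968*m*a^2 - 1260194*m*a*b + 661466*m*a + 5085350*m*b
    + 283138*m*c + 1267528*m - 728289*a^3 - 378119*a^2 + 4195428*a*b + 1566322*a*c + 2847454*a
    + 838033*b^2 + 790400*b - 2869209*c - 159087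

/-- The reduction of `cert5` at `y + 1` modulo the quartic of `y`. -/
def shifted5 (m a b c : A) : CubicPoly A where
  c0 :=
    924160*m^6 + 2628802*m^5*a + 178334*m^5*b + 1240757*m^5 + 2306790*m^4*a^2 + 178334*m^4*a*b
    + 1749767*m^4*a - 1473602*m^4*b - 330315*m^4*c + 724166*m^4 + 602148*m^3*a^3
    - 123101*m^3*a^2 - 2769953*m^3*a*b - 330676*m^3*a*c + 723083*m^3*a - 252339*m^3*b^2
    - 532114*m^3*b + 362805*m^3*c + 147288*m^3 - 379772*m^2*a^3 - 791312*m^2*a^2*b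
    + 4332*m^2*a^2 - 36822*m^2*a*b + 831022*m^2*a*c + 136097*m^2*a + 463524*m^2*b^2
    + 533558*m^2*b*c - 100719*m^2*b - 267501*m^2*c - 14801*m^2 - 34295*m*a^2*b - 35739*m*a^2*c
    + 34295*m*a*b^2 - 453777*m*a*c + 256310*m*b*c + 32851*m*c^2 + 219849*m*c - 13718*a^3*b
    - 90611*a^2*c + 13718*a*b^2 - 13718*a*b*c - 115159*a*c + 220571*b*c + 53428*c^2 + 191691*c
  c1 :=
    -178334*m^6 - 178334*m^5*a - 3181493*m^5 - 7429019*m^4*a - 272916*m^4*b - 4115400*m^4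
    - 5988990*m^3*a^2 - 599260*m^3*a*b - 4378930*m^3*a + 4519359*m^3*b + 548359*m^3*c
    - 2458410*m^3 - 1415481*m^2*a^3 + 343672*m^2*a^2 + 7060799*m^2*a*b + 998526*m^2*a*c
    - 1580458*m^2*a + 673265*m^2*b^2 + 1535694*m^2*b - 1945790*m^2*c - 573268*m^2 + 793839*m*a^3
    + 1590927*m*a^2*b - 8664*m*a^2 + 527421*m*a*b - 2390181*m*a*c - 272194*m*a - 1197076*m*b^2
    - 994194*m*b*c - 18411*m*b + 367137*m*c + 29602*m + 13718*a^4 + 97470*a^2*b - 41154*a^2*c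
    - 20577*a*b^2 + 115159*a*b - 220571*b^2 - 60287*b*c - 191691*b + 6859*c^2 + 161006*c
  c2 :=
    373274*m^5 + 446918*m^4*a + 3424807*m^4 + 6842755*m^3*a + 31768*m^3*b - 82308*m^3*c
    + 4127674*m^3 + 4739569*m^2*a^2 + 859902*m^2*a*b + 3290154*m^2*a - 4239223*m^2*b
    - 429590*m^2*c + 2552631*m^2 + 968202*m*a^3 - 771818*m*a^2 - 4772420*m*a*b - 1134262*m*a*c
    + 1211516*m*a - 695286*m*b^2 - 1307181*m*b + 2187299*m*c + 704672*m - 490960*a^3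
    - 736440*a^2*b - 110827*a^2 + 183749*a*b + 1251948*a*c + 327788*a + 484101*b^2 + 463524*b*c
    - 261725*b + 66063*c - 14801
  c3 :=
    -194940*m^4 - 268584*m^3*a - 1167474*m^3 - 42598*m^2*a^2 - 2059144*m^2*a + 62814*m^2*b
    + 82308*m^2*c - 1253031*m^2 - 1418008*m*a^2 - 353780*m*a*b - 495292*m*a + 1210072*m*b
    + 211546*m*c - 818387*m - 231762*a^3 + 97470*a^2 + 1091664*a*b + 463524*a*c + 26714*a
    + 231762*b^2 + 137902*b - 620920*c - 278692

/-- The reduction of `cert6` at `y + 1` modulo the quartic of `y`. -/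
def shifted6 (m a b c : A) : CubicPoly A where
  c0 :=
    6859*m^5*a - 13718*m^5 + 13718*m^4*a^2 - 61731*m^4*a - 20577*m^4*b + 13718*m^4*c + 13718*m^4
    + 6859*m^3*a^3 - 75449*m^3*a^2 - 61731*m^3*a*b + 6859*m^3*a*c - 13718*m^3*a - 6859*m^3*b^2
    + 20577*m^3*b + 61731*m^3*c + 34295*m^3 - 20577*m^2*a^3 - 20577*m^2*a^2*b - 20577*m^2*a^2
    + 20577*m^2*a*b + 68590*m^2*a*c + 13718*m^2*a + 13718*m^2*b^2 + 6859*m^2*b*c + 6859*m^2*b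
    + 13718*m^2 + 6859*m*a^2*c + 13718*m*a*c - 20577*m*b*c + 6859*m*c^2 - 102885*m*c
    + 6859*a^2*c - 6859*a*c - 13718*b*c + 6859*c^2 - 82308*c
  c1 :=
    20577*m^5 - 27436*m^4*a - 6859*m^4*b + 150898*m^4 - 75449*m^3*a^2 - 20577*m^3*a*b
    + 212629*m^3*a + 34295*m^3*b - 6859*m^3*c + 123462*m^3 - 20577*m^2*a^3 + 144039*m^2*a^2
    + 123462*m^2*a*b + 13718*m^2*a*c + 96026*m^2*a + 27436*m^2*b^2 - 48013*m^2*b - 68590*m^2*c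
    - 13718*m^2 + 41154*m*a^3 + 34295*m*a^2*b + 41154*m*a^2 - 54872*m*a*b - 82308*m*a*c
    - 27436*m*a - 6859*m*b^2 - 34295*m*b*c + 89167*m*b - 68590*m*c - 27436*m - 6859*a^2*b
    + 6859*a*b + 13718*b^2 - 6859*b*c + 82308*b - 82308*c
  c2 :=
    27436*m^5 + 27436*m^4*a + 89167*m^4 + 150898*m^3*a - 20577*m^3*b - 75449*m^3
    + 130321*m^2*a^2 + 20577*m^2*a*b - 171475*m^2*a - 96026*m^2*b + 20577*m^2*c - 205770*m^2
    + 27436*m*a^3 - 48013*m*a^2 - 137180*m*a*b - 20577*m*a*c - 253783*m*a - 20577*m*b^2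
    + 102885*m*b + 27436*m*c - 75449*m - 13718*a^3 - 20577*a^2*b - 27436*a^2 + 6859*a*b
    + 48013*a*c - 68590*a + 13718*b^2 + 13718*b*c + 89167*b - 61731*c + 13718
  c3 :=
    -27436*m^4 - 27436*m^3*a - 109744*m^3 + 6859*m^2*a^2 - 157757*m^2*a + 27436*m^2*b
    - 61731*m^2 - 41154*m*a^2 - 13718*m*a*b - 109744*m*a + 109744*m*b - 27436*m*c + 68590*m
    - 6859*a^3 - 6859*a^2 + 27436*a*b + 13718*a*c - 13718*a + 6859*b^2 + 54872*b - 48013*c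
    + 54872

/-- The certificate at shift `k`. -/
def cert (k : ℕ) (m a b c : A) : CubicPoly A :=
  match k with
  | 0 => cert0 m a b c
  | 1 => cert1 m a b c
  | 2 => cert2 m a b c
  | 3 => cert3 m a b c
  | 4 => cert4 m a b c
  | 5 => cert5 m a b c
  | 6 => cert6 m a b c
  | _ => ⟨0, 0, 0, 0⟩

/-- The reduction of the certificate at `y + 1` modulo the quartic of `y`. -/
def shifted (k : ℕ) (m a b c : A) : CubicPoly A :=
  match k with
  | 0 => shifted0 m a b c
  | 1 => shifted1 m a b c
  | 2 => shifted2 m a b c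
  | 3 => shifted3 m a b c
  | 4 => shifted4 m a b c
  | 5 => shifted5 m a b c
  | 6 => shifted6 m a b c
  | _ => ⟨0, 0, 0, 0⟩

/-- The coefficient of the Vandermonde in the alternating sum of `y ^ 7 * p.eval y` over the roots
of the quartic. -/
def CubicPoly.trace (p : CubicPoly A) (m a b c : A) : A :=
  p.c0 * hsym m a b c 4 + p.c1 * hsym m a b c 5 + p.c2 * hsym m a b c 6 + p.c3 * hsym m a b c 7

/-- The coefficient of the Vandermonde in the alternating sum of
`(y ^ 3 + a * y + (m * a - b)) ^ 2 * p.eval y` over the roots of the quartic. -/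
def CubicPoly.twistedTrace (p : CubicPoly A) (m a b c : A) : A :=
  p.c0 * (hsym m a b c 3 + 2 * a * hsym m a b c 1 + 2 * (m * a - b))
    + p.c1 * (hsym m a b c 4 + 2 * a * hsym m a b c 2 + 2 * (m * a - b) * hsym m a b c 1 + a ^ 2)
    + p.c2 * (hsym m a b c 5 + 2 * a * hsym m a b c 3 + 2 * (m * a - b) * hsym m a b c 2
      + a ^ 2 * hsym m a b c 1 + 2 * (m * a - b) * a)
    + p.c3 * (hsym m a b c 6 + 2 * a * hsym m a b c 4 + 2 * (m * a - b) * hsym m a b c 3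
      + a ^ 2 * hsym m a b c 2 + 2 * (m * a - b) * a * hsym m a b c 1 + (m * a - b) ^ 2)

set_option maxHeartbeats 4000000 in
theorem cert0_shift {m a b c y : A} (h : y ^ 4 - m * y ^ 3 + a * y ^ 2 - b * y + c = 0) :
    (cert0 (m + 1) (a + (m - y)) (b + (a - y * (m - y)))
      (c + (b - y * (a - y * (m - y))))).eval (y + 1) = (shifted0 m a b c).eval y := by
  simp only [CubicPoly.eval, cert0, shifted0]
  linear_combination (-4946164*y^3 - 290364*y^2*m^2 + 8758085*y^2*m + 9096802*y^2*a - 3527547*y^2 - 10692*y*m^3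
    - 2146759*y*m^2 - 7091545*y*m*a + 9637761*y*m + 8880221*y*a + 960917*y - 200704*m^4
    - 1671156*m^3 + 398655*m^2*a - 6115398*m^2 - 9736169*m*a - 1309517*m*b - 962699*m
    - 6147147*a^2 + 200056*a + 1453524*b + 795526*c - 243) * h

set_option maxHeartbeats 4000000 in
theorem cert1_shift {m a b c y : A} (h : y ^ 4 - m * y ^ 3 + a * y ^ 2 - b * y + c = 0) :
    (cert1 (m + 1) (a + (m - y)) (b + (a - y * (m - y)))
      (c + (b - y * (a - y * (m - y))))).eval (y + 1) = (shifted1 m a b c).eval y := by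
  simp only [CubicPoly.eval, cert1, shifted1]
  linear_combination (1003513*y^3 + 83052*y^2*m^2 - 3563252*y^2*m - 2725764*y^2*a + 5792896*y^2 - 83052*y*m^3
    + 1724660*y*m^2 + 3777042*y*m*a - 14580593*y*m - 3526254*y*a - 994376*y + 3175325*m^3
    + 2709412*m^2*a + 15447938*m^2 + 16417228*m*a - 1796742*m*b + 3749161*m - 4260448*a^2
    + 12001851*a + 399424*b + 718738*c - 2042571) * h

set_option maxHeartbeats 4000000 in
theorem cert2_shift {m a b c y : A} (h : y ^ 4 - m * y ^ 3 + a * y ^ 2 - b * y + c = 0) :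
    (cert2 (m + 1) (a + (m - y)) (b + (a - y * (m - y)))
      (c + (b - y * (a - y * (m - y))))).eval (y + 1) = (shifted2 m a b c).eval y := by
  simp only [CubicPoly.eval, cert2, shifted2]
  linear_combination (885199*y^3 + 198312*y^2*m^2 - 2774935*y^2*m - 2239386*y^2*a + 4116977*y^2 - 198312*y*m^3
    + 905153*y*m^2 + 2975933*y*m*a - 10879682*y*m - 2847355*y*a - 916386*y + 3089823*m^3
    + 2769711*m^2*a + 12138254*m^2 + 12647736*m*a - 1591387*m*b + 3335487*m - 2519134*a^2
    + 8393079*a - 159517*b + 468988*c - 1248798) * h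

set_option maxHeartbeats 4000000 in
theorem cert3_shift {m a b c y : A} (h : y ^ 4 - m * y ^ 3 + a * y ^ 2 - b * y + c = 0) :
    (cert3 (m + 1) (a + (m - y)) (b + (a - y * (m - y)))
      (c + (b - y * (a - y * (m - y))))).eval (y + 1) = (shifted3 m a b c).eval y := by
  simp only [CubicPoly.eval, cert3, shifted3]
  linear_combination (911738*y^3 + 110808*y^2*m^2 - 2515520*y^2*m - 1980568*y^2*a + 2595876*y^2 - 110808*y*m^3
    + 948864*y*m^2 + 2596620*y*m*a - 7267978*y*m - 2020092*y*a - 769620*y + 2212402*m^3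
    + 2102384*m^2*a + 8221720*m^2 + 8718804*m*a - 1037396*m*b + 2175082*m - 1083000*a^2
    + 4998942*a - 455996*b + 157092*c - 813722) * h

set_option maxHeartbeats 4000000 in
theorem cert4_shift {m a b c y : A} (h : y ^ 4 - m * y ^ 3 + a * y ^ 2 - b * y + c = 0) :
    (cert4 (m + 1) (a + (m - y)) (b + (a - y * (m - y)))
      (c + (b - y * (a - y * (m - y))))).eval (y + 1) = (shifted4 m a b c).eval y := by
  simp only [CubicPoly.eval, cert4, shifted4]
  linear_combination (774858*y^3 - 119852*y^2*m^2 - 2348153*y^2*m - 1566322*y^2*a + 1209027*y^2 + 119852*y*m^3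
    + 1528987*y*m^2 + 2258929*y*m*a - 3544507*y*m - 1052049*y*a - 473955*y + 712538*m^3
    + 674557*m^2*a + 3466474*m^2 + 4157219*m*a - 393699*m*b + 396435*m - 198911*a^2 + 1997926*a
    - 306698*b + 16606*c - 603459) * h

set_option maxHeartbeats 4000000 in
theorem cert5_shift {m a b c y : A} (h : y ^ 4 - m * y ^ 3 + a * y ^ 2 - b * y + c = 0) :
    (cert5 (m + 1) (a + (m - y)) (b + (a - y * (m - y)))
      (c + (b - y * (a - y * (m - y))))).eval (y + 1) = (shifted5 m a b c).eval y := by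
  simp only [CubicPoly.eval, cert5, shifted5]
  linear_combination (238621*y^3 - 82308*y^2*m^2 - 824524*y^2*m - 463524*y^2*a + 212268*y^2 + 82308*y*m^3
    + 766764*y*m^2 + 780482*y*m*a - 640053*y*m - 146566*y*a - 131404*y - 164255*m^3
    - 53428*m^2*a + 262086*m^2 + 655576*m*a - 42598*m*b - 249451*m + 224903*a - 56316*b
    - 13718*c - 191691) * h

set_option maxHeartbeats 4000000 in
theorem cert6_shift {m a b c y : A} (h : y ^ 4 - m * y ^ 3 + a * y ^ 2 - b * y + c = 0) :
    (cert6 (m + 1) (a + (m - y)) (b + (a - y * (m - y)))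
      (c + (b - y * (a - y * (m - y))))).eval (y + 1) = (shifted6 m a b c).eval y := by
  simp only [CubicPoly.eval, cert6, shifted6]
  linear_combination (6859*y^3 + 6859*y^2*m - 13718*y^2*a + 34295*y^2 + 6859*y*m^2 + 6859*y*m*a + 27436*y*m
    - 20577*y*a + 54872*y + 6859*m^3 - 6859*m^2*a + 68590*m^2 + 13718*m*a + 6859*m*b + 130321*m
    + 6859*a + 6859*b + 82308) * h

set_option maxHeartbeats 4000000 in
theorem level_identity_0 (m a b c : A) :
    opCoeff m 0 * m * (a * m ^ 2 - b * m + c) ^ 2 + (cert0 m a b c).trace m a b c =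
      0 := by
  simp only [opCoeff, hsym, CubicPoly.trace, cert0]
  ring

set_option maxHeartbeats 4000000 in
theorem level_identity_1 (m a b c : A) :
    -opCoeff m 1 * m * (a * m ^ 2 - b * m + c) ^ 2 + (cert1 m a b c).trace m a b c =
      m * (shifted0 m a b c).twistedTrace m a b c := by
  simp only [opCoeff, hsym, CubicPoly.trace, cert1, CubicPoly.twistedTrace, shifted0]
  ring

set_option maxHeartbeats 4000000 in
theorem level_identity_2 (m a b c : A) :
    opCoeff m 2 * m * (a * m ^ 2 - b * m + c) ^ 2 + (cert2 m a b c).trace m a b c =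
      m * (shifted1 m a b c).twistedTrace m a b c := by
  simp only [opCoeff, hsym, CubicPoly.trace, cert2, CubicPoly.twistedTrace, shifted1]
  ring

set_option maxHeartbeats 4000000 in
theorem level_identity_3 (m a b c : A) :
    -opCoeff m 3 * m * (a * m ^ 2 - b * m + c) ^ 2 + (cert3 m a b c).trace m a b c =
      m * (shifted2 m a b c).twistedTrace m a b c := by
  simp only [opCoeff, hsym, CubicPoly.trace, cert3, CubicPoly.twistedTrace, shifted2]
  ring

set_option maxHeartbeats 4000000 in
theorem level_identity_4 (m a b c : A) :
    opCoeff m 4 * m * (a * m ^ 2 - b * m + c) ^ 2 + (cert4 m a b c).trace m a b c =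
      m * (shifted3 m a b c).twistedTrace m a b c := by
  simp only [opCoeff, hsym, CubicPoly.trace, cert4, CubicPoly.twistedTrace, shifted3]
  ring

set_option maxHeartbeats 4000000 in
theorem level_identity_5 (m a b c : A) :
    -opCoeff m 5 * m * (a * m ^ 2 - b * m + c) ^ 2 + (cert5 m a b c).trace m a b c =
      m * (shifted4 m a b c).twistedTrace m a b c := by
  simp only [opCoeff, hsym, CubicPoly.trace, cert5, CubicPoly.twistedTrace, shifted4]
  ring

set_option maxHeartbeats 4000000 in
theorem level_identity_6 (m a b c : A) :
    opCoeff m 6 * m * (a * m ^ 2 - b * m + c) ^ 2 + (cert6 m a b c).trace m a b c =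
      m * (shifted5 m a b c).twistedTrace m a b c := by
  simp only [opCoeff, hsym, CubicPoly.trace, cert6, CubicPoly.twistedTrace, shifted5]
  ring

set_option maxHeartbeats 4000000 in
theorem level_identity_7 (m a b c : A) :
    -opCoeff m 7 * m * (a * m ^ 2 - b * m + c) ^ 2 =
      m * (shifted6 m a b c).twistedTrace m a b c := by
  simp only [opCoeff, hsym, CubicPoly.twistedTrace, shifted6]
  ring

theorem cert_shift (k : ℕ) {m a b c y : A} (h : y ^ 4 - m * y ^ 3 + a * y ^ 2 - b * y + c = 0) :
    (cert k (m + 1) (a + (m - y)) (b + (a - y * (m - y)))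
      (c + (b - y * (a - y * (m - y))))).eval (y + 1) = (shifted k m a b c).eval y := by
  match k with
  | 0 => exact cert0_shift h
  | 1 => exact cert1_shift h
  | 2 => exact cert2_shift h
  | 3 => exact cert3_shift h
  | 4 => exact cert4_shift h
  | 5 => exact cert5_shift h
  | 6 => exact cert6_shift h
  | k + 7 => simp [cert, shifted, CubicPoly.eval]

theorem level_identity_succ {k : ℕ} (hk : k < 7) (m a b c : A) :
    (-1) ^ (k + 1) * opCoeff m (k + 1) * m * (a * m ^ 2 - b * m + c) ^ 2
        + (cert (k + 1) m a b c).trace m a b c =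
      m * (shifted k m a b c).twistedTrace m a b c := by
  interval_cases k
  · have := level_identity_1 m a b c
    simp only [cert, shifted]
    linear_combination this
  · have := level_identity_2 m a b c
    simp only [cert, shifted]
    linear_combination this
  · have := level_identity_3 m a b c
    simp only [cert, shifted]
    linear_combination this
  · have := level_identity_4 m a b c
    simp only [cert, shifted]
    linear_combination this
  · have := level_identity_5 m a b c
    simp only [cert, shifted]
    linear_combination this
  · have := level_identity_6 m a b c
    simp only [cert, shifted]
    linear_combination this
  · have := level_identity_7 m a b c
    simp only [cert, shifted, CubicPoly.trace]
    linear_combination this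

end Certificate

section Alternants

variable {A : Type*} [CommRing A]

/-- The second elementary symmetric polynomial. -/
def e2 (y : Fin 4 → A) : A :=
  y 0 * y 1 + y 0 * y 2 + y 0 * y 3 + y 1 * y 2 + y 1 * y 3 + y 2 * y 3

/-- The third elementary symmetric polynomial. -/
def e3 (y : Fin 4 → A) : A :=
  y 0 * y 1 * y 2 + y 0 * y 1 * y 3 + y 0 * y 2 * y 3 + y 1 * y 2 * y 3

/-- The fourth elementary symmetric polynomial. -/
def e4 (y : Fin 4 → A) : A := y 0 * y 1 * y 2 * y 3

/-- The Vandermonde product of four quantities. -/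
def vdm (y : Fin 4 → A) : A :=
  (y 0 - y 1) * (y 0 - y 2) * (y 0 - y 3) * (y 1 - y 2) * (y 1 - y 3) * (y 2 - y 3)

/-- The signed Vandermonde product of the quantities other than the `i`-th. -/
def minor (y : Fin 4 → A) : Fin 4 → A :=
  ![(y 1 - y 2) * (y 1 - y 3) * (y 2 - y 3), -((y 0 - y 2) * (y 0 - y 3) * (y 2 - y 3)),
    (y 0 - y 1) * (y 0 - y 3) * (y 1 - y 3), -((y 0 - y 1) * (y 0 - y 2) * (y 1 - y 2))]

theorem quartic_eq_zero (y : Fin 4 → A) (i : Fin 4) :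
    y i ^ 4 - (∑ j, y j) * y i ^ 3 + e2 y * y i ^ 2 - e3 y * y i + e4 y = 0 := by
  fin_cases i <;> simp [Fin.sum_univ_four, e2, e3, e4] <;> ring

theorem sum_minor_mul_pow (y : Fin 4 → A) :
    ∀ l : ℕ, ∑ i, minor y i * y i ^ (l + 3) = vdm y * hsym (∑ j, y j) (e2 y) (e3 y) (e4 y) l
  | 0 => by simp [Fin.sum_univ_four, minor, vdm, hsym]; ring
  | 1 => by simp [Fin.sum_univ_four, minor, vdm, hsym]; ring
  | 2 => by simp [Fin.sum_univ_four, minor, vdm, hsym, e2]; ring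
  | 3 => by simp [Fin.sum_univ_four, minor, vdm, hsym, e2, e3]; ring
  | l + 4 => by
    rw [hsym]
    have h0 := sum_minor_mul_pow y l
    have h1 := sum_minor_mul_pow y (l + 1)
    have h2 := sum_minor_mul_pow y (l + 2)
    have h3 := sum_minor_mul_pow y (l + 3)
    have q (i : Fin 4) : minor y i * y i ^ (l + 4 + 3) =
        (∑ j, y j) * (minor y i * y i ^ (l + 3 + 3)) - e2 y * (minor y i * y i ^ (l + 2 + 3))
          + e3 y * (minor y i * y i ^ (l + 1 + 3)) - e4 y * (minor y i * y i ^ (l + 3)) := by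
      linear_combination minor y i * y i ^ (l + 3) * quartic_eq_zero y i
    rw [Finset.sum_congr rfl fun i _ => q i, Finset.sum_sub_distrib, Finset.sum_add_distrib,
      Finset.sum_sub_distrib, ← Finset.mul_sum, ← Finset.mul_sum, ← Finset.mul_sum,
      ← Finset.mul_sum, h0, h1, h2, h3]
    ring

theorem sum_minor_mul_low (y : Fin 4 → A) :
    ∑ i, minor y i = 0 ∧ ∑ i, minor y i * y i = 0 ∧ ∑ i, minor y i * y i ^ 2 = 0 := by
  refine ⟨?_, ?_, ?_⟩ <;> simp [Fin.sum_univ_four, minor] <;> ring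

theorem sum_minor_trace (y : Fin 4 → A) (p : CubicPoly A) :
    ∑ i, minor y i * (y i ^ 7 * p.eval (y i)) =
      vdm y * p.trace (∑ j, y j) (e2 y) (e3 y) (e4 y) := by
  have h4 := sum_minor_mul_pow y 4
  have h5 := sum_minor_mul_pow y 5
  have h6 := sum_minor_mul_pow y 6
  have h7 := sum_minor_mul_pow y 7
  rw [CubicPoly.trace]
  simp only [CubicPoly.eval]
  generalize minor y = V at *
  generalize hsym (∑ j, y j) (e2 y) (e3 y) (e4 y) = H at *
  simp only [Fin.sum_univ_four] at *
  linear_combination p.c0 * h4 + p.c1 * h5 + p.c2 * h6 + p.c3 * h7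

theorem sum_minor_twistedTrace (y : Fin 4 → A) (p : CubicPoly A) {m : A} (hm : ∑ j, y j = m) :
    ∑ i, minor y i * ((y i ^ 3 + e2 y * y i + (m * e2 y - e3 y)) ^ 2 * p.eval (y i)) =
      vdm y * p.twistedTrace m (e2 y) (e3 y) (e4 y) := by
  obtain ⟨l0, l1, l2⟩ := sum_minor_mul_low y
  have h0 : hsym m (e2 y) (e3 y) (e4 y) 0 = 1 := by rw [hsym]
  have s0 := sum_minor_mul_pow y 0
  have s1 := sum_minor_mul_pow y 1
  have s2 := sum_minor_mul_pow y 2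
  have s3 := sum_minor_mul_pow y 3
  have s4 := sum_minor_mul_pow y 4
  have s5 := sum_minor_mul_pow y 5
  have s6 := sum_minor_mul_pow y 6
  rw [hm] at s0 s1 s2 s3 s4 s5 s6
  rw [h0] at s0
  rw [CubicPoly.twistedTrace]
  simp only [CubicPoly.eval]
  clear h0 hm
  generalize hsym m (e2 y) (e3 y) (e4 y) = H at *
  generalize e2 y = a at *
  generalize m * a - e3 y = g at *
  generalize minor y = V at *
  simp only [Fin.sum_univ_four] at *
  linear_combination p.c0 * (s3 + 2 * a * s1 + 2 * g * s0 + a ^ 2 * l2 + 2 * a * g * l1 + g ^ 2 * l0)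
    + p.c1 * (s4 + 2 * a * s2 + 2 * g * s1 + a ^ 2 * s0 + 2 * a * g * l2 + g ^ 2 * l1)
    + p.c2 * (s5 + 2 * a * s3 + 2 * g * s2 + a ^ 2 * s1 + 2 * a * g * s0 + g ^ 2 * l2)
    + p.c3 * (s6 + 2 * a * s4 + 2 * g * s3 + a ^ 2 * s2 + 2 * a * g * s1 + g ^ 2 * s0)

theorem prod_sub_eq (y : Fin 4 → A) {m : A} (hm : ∑ j, y j = m) :
    ∏ j, (m - y j) = e2 y * m ^ 2 - e3 y * m + e4 y := by
  subst hm
  simp [Fin.sum_univ_four, Fin.prod_univ_four, e2, e3, e4]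
  ring

theorem prod_erase_sub_eq (y : Fin 4 → A) {m : A} (hm : ∑ j, y j = m) (i : Fin 4) :
    ∏ j ∈ Finset.univ.erase i, (m - y j) = y i ^ 3 + e2 y * y i + (m * e2 y - e3 y) := by
  have h (k : Fin 4) : (Finset.univ.erase k : Finset (Fin 4)) =
      Finset.univ.filter (fun j => j ≠ k) := by ext; simp
  subst hm
  rw [h, Finset.prod_filter]
  fin_cases i <;> simp [Fin.sum_univ_four, Fin.prod_univ_four, e2, e3] <;> ring

theorem minor_update (y : Fin 4 → A) (i : Fin 4) (v : A) :
    minor (Function.update y i v) i = minor y i := by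
  fin_cases i <;> simp [minor]

theorem e2_update (y : Fin 4 → A) {m : A} (hm : ∑ j, y j = m) (i : Fin 4) :
    e2 (Function.update y i (y i + 1)) = e2 y + (m - y i) := by
  subst hm
  fin_cases i <;> simp [Fin.sum_univ_four, e2, Function.update] <;> ring

theorem e3_update (y : Fin 4 → A) {m : A} (hm : ∑ j, y j = m) (i : Fin 4) :
    e3 (Function.update y i (y i + 1)) = e3 y + (e2 y - y i * (m - y i)) := by
  subst hm
  fin_cases i <;> simp [Fin.sum_univ_four, e2, e3, Function.update] <;> ring

theorem e4_update (y : Fin 4 → A) {m : A} (hm : ∑ j, y j = m) (i : Fin 4) :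
    e4 (Function.update y i (y i + 1)) = e4 y + (e3 y - y i * (e2 y - y i * (m - y i))) := by
  subst hm
  fin_cases i <;> simp [Fin.sum_univ_four, e2, e3, e4, Function.update] <;> ring

end Alternants

section LevelSums

open PowerSeries

/-- The slopes of the line on which the terms are evaluated; they sum to zero. -/
def slope : Fin 4 → ℚ := ![1, -1, 2, -2]

/-- The point `d + slope * X`. -/
def pt (d : Fin 4 → ℕ) (j : Fin 4) : ℚ⟦X⟧ := (d j : ℚ⟦X⟧) + C (slope j) * X

/-- The factor of the weight attached to one coordinate. -/
def wt (j : Fin 4) (N e : ℕ) : ℚ⟦X⟧ :=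
  (∏ r ∈ Finset.range N, ((r : ℚ⟦X⟧) - C (slope j) * X)) ^ 2 *
    ((∏ r ∈ Finset.range e, (C (slope j) * X + ((r + 1 : ℕ) : ℚ⟦X⟧))) ^ 7)⁻¹

/-- The weight of `d` at level `N`. -/
def weight (N : ℕ) (d : Fin 4 → ℕ) : ℚ⟦X⟧ := ∏ j, wt j (N - d j) (d j)

/-- The index set of level `N`. -/
def level (N : ℕ) : Finset (Fin 4 → ℕ) :=
  (Fintype.piFinset fun _ : Fin 4 => Finset.range (N + 1)).filter (fun d => ∑ j, d j = N)

theorem mem_level {N : ℕ} {d : Fin 4 → ℕ} : d ∈ level N ↔ ∑ j, d j = N := by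
  simp only [level, Finset.mem_filter, Fintype.mem_piFinset, Finset.mem_range,
    and_iff_right_iff_imp]
  rintro rfl j
  exact Nat.lt_succ_of_le (Finset.single_le_sum (f := d) (fun _ _ => Nat.zero_le _)
    (Finset.mem_univ j))

theorem le_of_mem_level {N : ℕ} {d : Fin 4 → ℕ} (hd : d ∈ level N) (j : Fin 4) : d j ≤ N := by
  rw [mem_level] at hd
  exact hd ▸ Finset.single_le_sum (f := d) (fun _ _ => Nat.zero_le _) (Finset.mem_univ j)

theorem sum_pt {N : ℕ} {d : Fin 4 → ℕ} (hd : d ∈ level N) : ∑ j, pt d j = (N : ℚ⟦X⟧) := by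
  rw [mem_level] at hd
  rw [← hd]
  simp [pt, Fin.sum_univ_four, slope]
  ring

theorem pt_update (d : Fin 4 → ℕ) (i : Fin 4) :
    pt (Function.update d i (d i + 1)) = Function.update (pt d) i (pt d i + 1) := by
  funext j
  by_cases h : j = i
  · subst h
    simp [pt]
    ring
  · simp [pt, h]

theorem wt_succ_left (j : Fin 4) (N e : ℕ) :
    wt j (N + 1) e = ((N : ℚ⟦X⟧) - C (slope j) * X) ^ 2 * wt j N e := by
  simp only [wt, Finset.prod_range_succ]
  ring

theorem wt_succ_right (j : Fin 4) (N e : ℕ) :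
    (((e + 1 : ℕ) : ℚ⟦X⟧) + C (slope j) * X) ^ 7 * wt j N (e + 1) = wt j N e := by
  have h : constantCoeff ((C (slope j) * X + ((e + 1 : ℕ) : ℚ⟦X⟧)) ^ 7) ≠ 0 := by
    simp only [map_pow, map_add, map_mul, constantCoeff_X, map_natCast, mul_zero, zero_add]
    positivity
  have h' := PowerSeries.mul_inv_cancel _ h
  simp only [wt, Finset.prod_range_succ, mul_pow, PowerSeries.mul_inv_rev]
  linear_combination (∏ r ∈ Finset.range N, ((r : ℚ⟦X⟧) - C (slope j) * X)) ^ 2 *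
    ((∏ r ∈ Finset.range e, (C (slope j) * X + ((r + 1 : ℕ) : ℚ⟦X⟧))) ^ 7)⁻¹ * h'

theorem weight_succ {N : ℕ} {d : Fin 4 → ℕ} (hd : d ∈ level N) (i : Fin 4) :
    (pt d i + 1) ^ 7 * weight (N + 1) (Function.update d i (d i + 1)) =
      (∏ j ∈ Finset.univ.erase i, ((N : ℚ⟦X⟧) - pt d j)) ^ 2 * weight N d := by
  simp only [weight]
  rw [← Finset.mul_prod_erase _ _ (Finset.mem_univ i),
    ← Finset.mul_prod_erase _ (fun j => wt j (N - d j) (d j)) (Finset.mem_univ i)]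
  have h1 : ∏ j ∈ Finset.univ.erase i, wt j (N + 1 - Function.update d i (d i + 1) j)
      (Function.update d i (d i + 1) j) =
      (∏ j ∈ Finset.univ.erase i, ((N : ℚ⟦X⟧) - pt d j)) ^ 2 *
        ∏ j ∈ Finset.univ.erase i, wt j (N - d j) (d j) := by
    rw [← Finset.prod_pow, ← Finset.prod_mul_distrib]
    refine Finset.prod_congr rfl fun j hj => ?_
    have hle := le_of_mem_level hd j
    rw [Function.update_of_ne (Finset.ne_of_mem_erase hj), Nat.succ_sub hle, wt_succ_left, pt,
      Nat.cast_sub hle]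
    ring
  have h2 := wt_succ_right i (N - d i) (d i)
  rw [h1, Function.update_self, Nat.add_sub_add_right]
  have h3 : pt d i + 1 = ((d i + 1 : ℕ) : ℚ⟦X⟧) + C (slope i) * X := by
    simp [pt]
    ring
  rw [h3]
  linear_combination (∏ j ∈ Finset.univ.erase i, ((N : ℚ⟦X⟧) - pt d j)) ^ 2 *
        (∏ j ∈ Finset.univ.erase i, wt j (N - d j) (d j)) * h2

theorem X_sq_dvd_wt {N : ℕ} (hN : N ≠ 0) (j : Fin 4) (e : ℕ) : (X : ℚ⟦X⟧) ^ 2 ∣ wt j N e := by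
  obtain ⟨M, rfl⟩ := Nat.exists_eq_succ_of_ne_zero hN
  refine Dvd.dvd.mul_right (pow_dvd_pow_of_dvd ?_ 2) _
  refine dvd_trans ?_ (Finset.dvd_prod_of_mem _ (Finset.mem_range.2 M.succ_pos))
  simp

theorem X_dvd_cert_eval {k : ℕ} {m a b c y : ℚ⟦X⟧} (ha : constantCoeff a = 0)
    (hb : constantCoeff b = 0) (hc : constantCoeff c = 0) (hy : constantCoeff y = 0) :
    X ∣ (cert k m a b c).eval y := by
  rw [X_dvd_iff]
  match k with
  | 0 => simp [CubicPoly.eval, cert, cert0, ha, hb, hc, hy]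
  | 1 => simp [CubicPoly.eval, cert, cert1, ha, hb, hc, hy]
  | 2 => simp [CubicPoly.eval, cert, cert2, ha, hb, hc, hy]
  | 3 => simp [CubicPoly.eval, cert, cert3, ha, hb, hc, hy]
  | 4 => simp [CubicPoly.eval, cert, cert4, ha, hb, hc, hy]
  | 5 => simp [CubicPoly.eval, cert, cert5, ha, hb, hc, hy]
  | 6 => simp [CubicPoly.eval, cert, cert6, ha, hb, hc, hy]
  | k + 7 => simp [CubicPoly.eval, cert]

end LevelSums

section Telescoping

open PowerSeries

/-- The certificate at `d`, evaluated at the `i`-th coordinate. -/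
def certAt (k N : ℕ) (d : Fin 4 → ℕ) (i : Fin 4) : ℚ⟦X⟧ :=
  (cert k (N : ℚ⟦X⟧) (e2 (pt d)) (e3 (pt d)) (e4 (pt d))).eval (pt d i)

/-- The summand which telescopes along the `i`-th coordinate. -/
def stepTerm (k N : ℕ) (i : Fin 4) (d : Fin 4 → ℕ) : ℚ⟦X⟧ :=
  minor (pt d) i * (pt d i ^ 7 * certAt k N d i) * weight N d

/-- The summand obtained from `stepTerm` by raising the `i`-th coordinate. -/
def shiftTerm (k N : ℕ) (i : Fin 4) (d : Fin 4 → ℕ) : ℚ⟦X⟧ :=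
  minor (pt d) i * ((pt d i ^ 3 + e2 (pt d) * pt d i + (N * e2 (pt d) - e3 (pt d))) ^ 2 *
    (shifted k (N : ℚ⟦X⟧) (e2 (pt d)) (e3 (pt d)) (e4 (pt d))).eval (pt d i)) * weight N d

/-- The summand whose coefficients are the numbers of interest. -/
def mainTerm (N : ℕ) (d : Fin 4 → ℕ) : ℚ⟦X⟧ :=
  vdm (pt d) * (e2 (pt d) * N ^ 2 - e3 (pt d) * N + e4 (pt d)) ^ 2 * weight N d

theorem stepTerm_update (k : ℕ) {N : ℕ} {d : Fin 4 → ℕ} (hd : d ∈ level N) (i : Fin 4) :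
    stepTerm k (N + 1) i (Function.update d i (d i + 1)) = shiftTerm k N i d := by
  have hs := sum_pt hd
  have hw := weight_succ hd i
  rw [prod_erase_sub_eq _ hs] at hw
  have hc := cert_shift k (m := (N : ℚ⟦X⟧)) (hs ▸ quartic_eq_zero (pt d) i)
  rw [stepTerm, shiftTerm, certAt, pt_update, minor_update, e2_update _ hs, e3_update _ hs,
    e4_update _ hs, Function.update_self, Nat.cast_add, Nat.cast_one, hc]
  linear_combination minor (pt d) i *
    (shifted k (N : ℚ⟦X⟧) (e2 (pt d)) (e3 (pt d)) (e4 (pt d))).eval (pt d i) * hw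

theorem X_pow_dvd_stepTerm (k : ℕ) {N : ℕ} {d : Fin 4 → ℕ} (hd : d ∈ level (N + 1)) {i : Fin 4}
    (hi : d i = 0) : (X : ℚ⟦X⟧) ^ 15 ∣ stepTerm k (N + 1) i d := by
  have hy : (X : ℚ⟦X⟧) ^ 7 ∣ pt d i ^ 7 := pow_dvd_pow_of_dvd (by simp [pt, hi]) 7
  by_cases hlt : ∀ j, d j < N + 1
  · have hw : (X : ℚ⟦X⟧) ^ 8 ∣ weight (N + 1) d := by
      have : ((X : ℚ⟦X⟧) ^ 2) ^ 4 ∣ weight (N + 1) d := by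
        have h := Finset.prod_dvd_prod_of_dvd (s := (Finset.univ : Finset (Fin 4)))
          (fun _ => (X : ℚ⟦X⟧) ^ 2) (fun j => wt j (N + 1 - d j) (d j))
          (fun j _ => X_sq_dvd_wt (by have := hlt j; omega) j _)
        simpa [weight] using h
      simpa [← pow_mul] using this
    rw [stepTerm, show (15 : ℕ) = 7 + 8 from rfl, pow_add]
    exact mul_dvd_mul (Dvd.dvd.mul_left (Dvd.dvd.mul_right hy _) _) hw
  · push Not at hlt
    obtain ⟨l, hl⟩ := hlt
    have hsum := mem_level.1 hd
    have h0 (j : Fin 4) (hj : j ≠ l) : d j = 0 := by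
      have := Finset.add_sum_erase Finset.univ d (Finset.mem_univ l)
      have h2 := Finset.single_le_sum (f := d) (fun _ _ => Nat.zero_le _)
        (Finset.mem_erase.2 ⟨hj, Finset.mem_univ j⟩)
      omega
    have hil : i ≠ l := by
      rintro rfl
      omega
    have hc (j : Fin 4) (hj : j ≠ l) : constantCoeff (pt d j) = 0 := by simp [pt, h0 j hj]
    have hw : (X : ℚ⟦X⟧) ^ 6 ∣ weight (N + 1) d := by
      have h := Finset.prod_dvd_prod_of_dvd (s := Finset.univ.erase l)
        (fun _ => (X : ℚ⟦X⟧) ^ 2) (fun j => wt j (N + 1 - d j) (d j))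
        (fun j hj => X_sq_dvd_wt (by rw [h0 j (Finset.ne_of_mem_erase hj)]; omega) j _)
      rw [Finset.prod_const, Finset.card_erase_of_mem (Finset.mem_univ l), Finset.card_fin,
        ← pow_mul] at h
      exact h.trans (Finset.prod_dvd_prod_of_subset _ _ _ (Finset.erase_subset _ _))
    have hm : (X : ℚ⟦X⟧) ∣ minor (pt d) i := by
      rw [X_dvd_iff]
      clear hw hd hsum hy
      fin_cases i <;> fin_cases l <;> simp_all [minor]
    have hp : (X : ℚ⟦X⟧) ∣ certAt k (N + 1) d i := by
      refine X_dvd_cert_eval ?_ ?_ ?_ (hc i hil) <;> clear hw hd hsum hy hm hil hi <;>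
      fin_cases l <;> simp_all [e2, e3, e4]
    rw [stepTerm, show (X : ℚ⟦X⟧) ^ 15 = X * (X ^ 7 * X) * X ^ 6 by ring]
    exact mul_dvd_mul (mul_dvd_mul hm (mul_dvd_mul hy hp)) hw

theorem coeff_sum_stepTerm (k N : ℕ) (i : Fin 4) :
    coeff 14 (∑ d ∈ level (N + 1), stepTerm k (N + 1) i d) =
      coeff 14 (∑ d ∈ level N, shiftTerm k N i d) := by
  rw [← Finset.sum_filter_add_sum_filter_not (level (N + 1)) (fun d => d i = 0), map_add]
  have h0 : coeff 14 (∑ d ∈ level (N + 1) with d i = 0, stepTerm k (N + 1) i d) = 0 := by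
    rw [map_sum]
    refine Finset.sum_eq_zero fun d hd => ?_
    rw [Finset.mem_filter] at hd
    exact X_pow_dvd_iff.1 (X_pow_dvd_stepTerm k hd.1 hd.2) 14 (by norm_num)
  rw [h0, zero_add]
  refine congrArg _ (Eq.symm ?_)
  have hsum (d : Fin 4 → ℕ) (v : ℕ) :
      ∑ j, Function.update d i v j + d i = ∑ j, d j + v := by
    have h1 := Finset.add_sum_erase _ (Function.update d i v) (Finset.mem_univ i)
    have h2 := Finset.add_sum_erase _ d (Finset.mem_univ i)
    have h3 : ∑ j ∈ Finset.univ.erase i, Function.update d i v j = ∑ j ∈ Finset.univ.erase i, d j :=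
      Finset.sum_congr rfl fun j hj => Function.update_of_ne (Finset.ne_of_mem_erase hj) v d
    rw [Function.update_self] at h1
    omega
  refine Finset.sum_nbij' (fun d => Function.update d i (d i + 1))
    (fun d => Function.update d i (d i - 1)) ?_ ?_ ?_ ?_ ?_
  · intro d hd
    rw [mem_level] at hd
    have := hsum d (d i + 1)
    simp only [Finset.mem_filter, mem_level, Function.update_self]
    omega
  · intro d hd
    simp only [Finset.mem_filter, mem_level] at hd ⊢
    have := hsum d (d i - 1)
    omega
  · intro d _
    simp
  · intro d hd
    have : d i - 1 + 1 = d i := Nat.succ_pred (Finset.mem_filter.1 hd).2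
    simp [this]
  · intro d hd
    exact (stepTerm_update k hd i).symm

/-- The number attached to level `N`. -/
def mainSum (N : ℕ) : ℚ := coeff 14 (∑ d ∈ level N, mainTerm N d)

/-- The alternating sum of the shifted terms. -/
def shiftSum (k N : ℕ) : ℚ := coeff 14 (∑ d ∈ level N, ∑ i, shiftTerm k N i d)

theorem coeff_sum_trace (k N : ℕ) :
    coeff 14 (∑ d ∈ level (N + 1), vdm (pt d) *
      (cert k ((N + 1 : ℕ) : ℚ⟦X⟧) (e2 (pt d)) (e3 (pt d)) (e4 (pt d))).trace
        ((N + 1 : ℕ) : ℚ⟦X⟧) (e2 (pt d)) (e3 (pt d)) (e4 (pt d)) * weight (N + 1) d) =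
      shiftSum k N := by
  have h (d) (hd : d ∈ level (N + 1)) : vdm (pt d) *
      (cert k ((N + 1 : ℕ) : ℚ⟦X⟧) (e2 (pt d)) (e3 (pt d)) (e4 (pt d))).trace
        ((N + 1 : ℕ) : ℚ⟦X⟧) (e2 (pt d)) (e3 (pt d)) (e4 (pt d)) * weight (N + 1) d =
      ∑ i, stepTerm k (N + 1) i d := by
    have ht := sum_minor_trace (pt d)
      (cert k ((N + 1 : ℕ) : ℚ⟦X⟧) (e2 (pt d)) (e3 (pt d)) (e4 (pt d)))
    rw [sum_pt hd] at ht
    rw [← ht, Finset.sum_mul]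
    rfl
  rw [Finset.sum_congr rfl h, shiftSum, Finset.sum_comm, Finset.sum_comm (s := level N),
    map_sum, map_sum]
  exact Finset.sum_congr rfl fun i _ => coeff_sum_stepTerm k N i

theorem shiftSum_eq (k N : ℕ) :
    shiftSum k N = coeff 14 (∑ d ∈ level N, vdm (pt d) *
      (shifted k (N : ℚ⟦X⟧) (e2 (pt d)) (e3 (pt d)) (e4 (pt d))).twistedTrace
        (N : ℚ⟦X⟧) (e2 (pt d)) (e3 (pt d)) (e4 (pt d)) * weight N d) := by
  rw [shiftSum]
  congr 1
  refine Finset.sum_congr rfl fun d hd => ?_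
  rw [← sum_minor_twistedTrace (pt d) _ (sum_pt hd), Finset.sum_mul]
  rfl

theorem map_opCoeff {A B : Type*} [CommRing A] [CommRing B] (f : A →+* B) (m : A) (k : ℕ) :
    f (opCoeff m k) = opCoeff (f m) k := by
  match k with
  | 0 | 1 | 2 | 3 | 4 | 5 | 6 | 7 => simp [opCoeff, map_ofNat f]
  | k + 8 => simp [opCoeff]

theorem mainSum_succ_zero (N : ℕ) :
    opCoeff ((N + 1 : ℕ) : ℚ) 0 * (N + 1 : ℕ) * mainSum (N + 1) + shiftSum 0 N = 0 := by
  rw [← coeff_sum_trace, mainSum, ← map_natCast (C : ℚ →+* ℚ⟦X⟧) (N + 1)]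
  rw [mul_assoc, ← coeff_C_mul, ← coeff_C_mul, ← map_add, Finset.mul_sum, Finset.mul_sum,
    ← Finset.sum_add_distrib]
  refine (congrArg _ (Finset.sum_eq_zero fun d _ => ?_)).trans (map_zero (coeff 14))
  have h := level_identity_0 ((N + 1 : ℕ) : ℚ⟦X⟧) (e2 (pt d)) (e3 (pt d)) (e4 (pt d))
  rw [map_opCoeff, map_natCast, mainTerm, cert]
  linear_combination vdm (pt d) * weight (N + 1) d * h

theorem mainSum_succ_succ {k : ℕ} (hk : k < 7) (N : ℕ) :
    (-1) ^ (k + 1) * opCoeff ((N + 1 : ℕ) : ℚ) (k + 1) * (N + 1 : ℕ) * mainSum (N + 1)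
      + shiftSum (k + 1) N = (N + 1 : ℕ) * shiftSum k (N + 1) := by
  rw [← coeff_sum_trace, mainSum, shiftSum_eq, ← map_natCast (C : ℚ →+* ℚ⟦X⟧) (N + 1)]
  rw [mul_assoc, ← coeff_C_mul, ← coeff_C_mul, ← coeff_C_mul, ← map_add, Finset.mul_sum,
    Finset.mul_sum, Finset.mul_sum, ← Finset.sum_add_distrib]
  congr 1
  refine Finset.sum_congr rfl fun d _ => ?_
  have h := level_identity_succ hk ((N + 1 : ℕ) : ℚ⟦X⟧) (e2 (pt d)) (e3 (pt d)) (e4 (pt d))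
  rw [map_mul, map_opCoeff, map_natCast, mainTerm, map_pow, map_neg, map_one]
  linear_combination vdm (pt d) * weight (N + 1) d * h

theorem shiftSum_of_le {k : ℕ} (hk : 7 ≤ k) (N : ℕ) : shiftSum k N = 0 := by
  obtain ⟨l, rfl⟩ := Nat.exists_eq_add_of_le' hk
  simp [shiftSum_eq, shifted, CubicPoly.twistedTrace]

end Telescoping

section Recurrence

open PowerSeries

theorem level_zero : level 0 = {0} := by
  ext d
  rw [mem_level, Finset.mem_singleton, funext_iff]
  simp

theorem weight_zero : weight 0 0 = 1 := by
  simp [weight, wt]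

theorem vdm_pt_zero : vdm (pt 0) = 72 * X ^ 6 := by
  simp [vdm, pt, slope, map_ofNat (C : ℚ →+* ℚ⟦X⟧)]
  ring

theorem e2_pt_zero : e2 (pt 0) = -5 * X ^ 2 := by
  simp [e2, pt, slope, map_ofNat (C : ℚ →+* ℚ⟦X⟧)]
  ring

theorem e3_pt_zero : e3 (pt 0) = 0 := by
  simp [e3, pt, slope]

theorem e4_pt_zero : e4 (pt 0) = 4 * X ^ 4 := by
  simp [e4, pt, slope, map_ofNat (C : ℚ →+* ℚ⟦X⟧)]
  ring

theorem mainSum_zero : mainSum 0 = 1152 := by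
  rw [mainSum, level_zero, Finset.sum_singleton, mainTerm, weight_zero, vdm_pt_zero, e2_pt_zero,
    e3_pt_zero, e4_pt_zero]
  have : (72 * X ^ 6 * (-5 * X ^ 2 * ((0 : ℕ) : ℚ⟦X⟧) ^ 2 - 0 * ((0 : ℕ) : ℚ⟦X⟧)
      + 4 * X ^ 4) ^ 2 * 1) = C (1152 : ℚ) * X ^ 14 := by
    simp [map_ofNat (C : ℚ →+* ℚ⟦X⟧)]
    ring
  rw [this]
  simp [coeff_X_pow]

/-- The leading coefficients of the reduced certificates at level zero. -/
theorem twistedTrace_level_zero {k : ℕ} (hk : k < 7) :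
    ∃ u v : ℚ, (shifted k ((0 : ℕ) : ℚ⟦X⟧) (-5 * X ^ 2) 0 (4 * X ^ 4)).twistedTrace
        ((0 : ℕ) : ℚ⟦X⟧) (-5 * X ^ 2) 0 (4 * X ^ 4) =
      C (16 * ((-1) ^ (k + 1) * opCoeff 0 (k + 1))) * X ^ 8 + C u * X ^ 10 + C v * X ^ 12 := by
  interval_cases k
  · refine ⟨-103680, -5887320188, ?_⟩
    simp [shifted, shifted0, CubicPoly.twistedTrace, hsym, opCoeff,
      map_ofNat (C : ℚ →+* ℚ⟦X⟧)]
    ring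
  · refine ⟨2249280, -4529770392, ?_⟩
    simp [shifted, shifted1, CubicPoly.twistedTrace, hsym, opCoeff,
      map_ofNat (C : ℚ →+* ℚ⟦X⟧)]
    ring
  · refine ⟨-4560000, -3291967832, ?_⟩
    simp [shifted, shifted2, CubicPoly.twistedTrace, hsym, opCoeff,
      map_ofNat (C : ℚ →+* ℚ⟦X⟧)]
    ring
  · refine ⟨1915200, -1958220560, ?_⟩
    simp [shifted, shifted3, CubicPoly.twistedTrace, hsym, opCoeff,
      map_ofNat (C : ℚ →+* ℚ⟦X⟧)]
    ring
  · refine ⟨0, -630939916, ?_⟩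
    simp [shifted, shifted4, CubicPoly.twistedTrace, hsym, opCoeff,
      map_ofNat (C : ℚ →+* ℚ⟦X⟧)]
    ring
  · refine ⟨0, -18272376, ?_⟩
    simp [shifted, shifted5, CubicPoly.twistedTrace, hsym, opCoeff,
      map_ofNat (C : ℚ →+* ℚ⟦X⟧)]
    ring
  · refine ⟨0, 0, ?_⟩
    simp [shifted, shifted6, CubicPoly.twistedTrace, hsym, opCoeff,
      map_ofNat (C : ℚ →+* ℚ⟦X⟧)]
    ring

theorem shiftSum_zero {k : ℕ} (hk : k < 7) :
    (-1) ^ (k + 1) * opCoeff 0 (k + 1) * mainSum 0 = shiftSum k 0 := by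
  obtain ⟨u, v, h⟩ := twistedTrace_level_zero hk
  rw [shiftSum_eq, level_zero, Finset.sum_singleton, weight_zero, vdm_pt_zero, e2_pt_zero,
    e3_pt_zero, e4_pt_zero, h, mainSum_zero]
  generalize (-1) ^ (k + 1) * opCoeff (0 : ℚ) (k + 1) = s
  have : 72 * X ^ 6 * (C (16 * s) * X ^ 8 + C u * X ^ 10 + C v * X ^ 12) * 1 =
      C (1152 * s) * X ^ 14 + C (72 * u) * X ^ 16 + C (72 * v) * X ^ 18 := by
    simp only [map_mul, map_ofNat (C : ℚ →+* ℚ⟦X⟧)]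
    ring
  rw [this]
  simp only [map_add, coeff_C_mul, coeff_X_pow]
  norm_num
  ring

/-- The numbers annihilated by the recurrence. -/
def period (N : ℕ) : ℚ := N.factorial * mainSum N

theorem sum_range_opCoeff_mul_period {j : ℕ} (hj : j ≤ 7) (M : ℕ) :
    ∑ k ∈ Finset.range (j + 1),
      (-1) ^ k * opCoeff ((M + 1 + (j - k) : ℕ) : ℚ) k * period (M + 1 + (j - k)) =
        -(M.factorial * shiftSum j M) := by
  induction j generalizing M with
  | zero =>
    have := mainSum_succ_zero M
    simp only [zero_add, Finset.sum_range_one, period, Nat.sub_zero, add_zero, Nat.factorial_succ]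
    push_cast at this ⊢
    linear_combination (M.factorial : ℚ) * this
  | succ j ih =>
    have h := mainSum_succ_succ (k := j) (by omega) M
    rw [Finset.sum_range_succ]
    have e (k) (hk : k ∈ Finset.range (j + 1)) :
        (-1) ^ k * opCoeff ((M + 1 + (j + 1 - k) : ℕ) : ℚ) k * period (M + 1 + (j + 1 - k)) =
        (-1) ^ k * opCoeff ((M + 1 + 1 + (j - k) : ℕ) : ℚ) k * period (M + 1 + 1 + (j - k)) := by
      have := Finset.mem_range.1 hk
      rw [show M + 1 + (j + 1 - k) = M + 1 + 1 + (j - k) by omega]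
    rw [Finset.sum_congr rfl e, ih (by omega) (M + 1), Nat.sub_self, add_zero, period,
      Nat.factorial_succ]
    push_cast at h ⊢
    linear_combination (M.factorial : ℚ) * h

theorem sum_opCoeff_mul_period (N : ℕ) :
    ∑ k ∈ Finset.range 8,
      (if k ≤ N then (-1) ^ k * opCoeff ((N - k : ℕ) : ℚ) k * period (N - k) else 0) = 0 := by
  have hsum {j : ℕ} (hj : j ≤ 7) {M : ℕ} :
      ∑ k ∈ Finset.range (j + 1), (if k ≤ M + 1 + j then
        (-1) ^ k * opCoeff ((M + 1 + j - k : ℕ) : ℚ) k * period (M + 1 + j - k) else 0) =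
        -(M.factorial * shiftSum j M) := by
    rw [← sum_range_opCoeff_mul_period hj M]
    refine Finset.sum_congr rfl fun k hk => ?_
    have := Finset.mem_range.1 hk
    rw [if_pos (by omega), Nat.add_sub_assoc (by omega)]
  rcases lt_or_ge N 8 with hN | hN
  · rw [← Finset.sum_range_add_sum_Ico _ (Nat.succ_le_of_lt hN),
      Finset.sum_eq_zero (s := Finset.Ico _ _), add_zero]
    · rcases N with _ | j
      · simp [opCoeff]
      · rw [Finset.sum_range_succ, if_pos le_rfl, Nat.sub_self]
        have h := hsum (j := j) (by omega) (M := 0)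
        rw [zero_add, add_comm 1 j] at h
        rw [h, ← shiftSum_zero (by omega)]
        simp [period]
    · intro k hk
      rw [if_neg]
      have := Finset.mem_Ico.1 hk
      omega
  · obtain ⟨M, rfl⟩ := Nat.exists_eq_add_of_le' hN
    exact (hsum le_rfl).trans (by rw [shiftSum_of_le le_rfl, mul_zero, neg_zero])

end Recurrence

section Specialization

open PowerSeries

theorem hasSubst_slope :
    MvPowerSeries.HasSubst (fun j : Fin 4 => (C (slope j) * X : ℚ⟦X⟧)) :=
  MvPowerSeries.hasSubst_of_constantCoeff_zero fun j => by
    change constantCoeff (C (slope j) * X) = 0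
    simp

/-- The restriction of a power series to the line with the given slopes. -/
def toLine : R →ₐ[ℚ] ℚ⟦X⟧ := MvPowerSeries.substAlgHom hasSubst_slope

theorem toLine_X (j : Fin 4) : toLine (MvPowerSeries.X j) = C (slope j) * X :=
  MvPowerSeries.substAlgHom_X hasSubst_slope j

theorem toLine_Cc (a : ℚ) : toLine (Cc a) = C a := toLine.commutes a

theorem constantCoeff_toLine (G : R) :
    constantCoeff (toLine G) = MvPowerSeries.constantCoeff G := by
  have h : constantCoeff (toLine (G - Cc (MvPowerSeries.constantCoeff G))) = 0 := by
    rw [toLine, MvPowerSeries.substAlgHom_apply]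
    refine MvPowerSeries.constantCoeff_subst_eq_zero hasSubst_slope (fun j => ?_) ?_
    · change constantCoeff (C (slope j) * X) = 0
      simp
    · simp [Cc]
  rw [map_sub, map_sub, toLine_Cc, constantCoeff_C] at h
  exact sub_eq_zero.1 h

theorem prod_pairs {M : Type*} [CommMonoid M] (f : Fin 4 × Fin 4 → M) :
    ∏ p ∈ pairs, f p =
      f (0, 1) * f (0, 2) * f (0, 3) * f (1, 2) * f (1, 3) * f (2, 3) := by
  have : pairs = {(0, 1), (0, 2), (0, 3), (1, 2), (1, 3), (2, 3)} := by decide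
  rw [this]
  simp [mul_assoc]

theorem toLine_Vand : toLine Vand = 72 * X ^ 6 := by
  rw [← vdm_pt_zero, Vand, prod_pairs]
  simp [toLine_X, vdm, pt]

theorem toLine_inv {u : R} (hu : MvPowerSeries.constantCoeff u ≠ 0) :
    toLine u⁻¹ = (toLine u)⁻¹ := by
  rw [PowerSeries.eq_inv_iff_mul_eq_one (by rwa [constantCoeff_toLine]), ← map_mul,
    MvPowerSeries.inv_mul_cancel _ hu, map_one]

theorem prod_Icc_eq {M : Type*} [CommMonoid M] (f : ℕ → M) (N : ℕ) :
    ∏ m ∈ Finset.Icc 1 N, f m = ∏ r ∈ Finset.range N, f (r + 1) := by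
  rw [Finset.range_eq_Ico, Finset.prod_Ico_add']
  rfl

theorem constantCoeff_denominator_ne_zero (d : Fin 4 → ℕ) :
    MvPowerSeries.constantCoeff
      (∏ j, ∏ m ∈ Finset.Icc 1 (d j), (MvPowerSeries.X j + Cc (m : ℚ)) ^ n) ≠ 0 := by
  rw [map_prod]
  refine Finset.prod_ne_zero_iff.2 fun j _ => ?_
  rw [map_prod]
  refine Finset.prod_ne_zero_iff.2 fun m hm => ?_
  have := (Finset.mem_Icc.1 hm).1
  simp only [map_pow, map_add, MvPowerSeries.constantCoeff_X, Cc,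
    MvPowerSeries.constantCoeff_C, zero_add]
  exact pow_ne_zero _ (Nat.cast_ne_zero.2 (by omega))

theorem toLine_denominator (d : Fin 4 → ℕ) :
    toLine (∏ j, ∏ m ∈ Finset.Icc 1 (d j), (MvPowerSeries.X j + Cc (m : ℚ)) ^ n)⁻¹ =
      ∏ j, ((∏ r ∈ Finset.range (d j), (C (slope j) * X + ((r + 1 : ℕ) : ℚ⟦X⟧))) ^ 7)⁻¹ := by
  rw [toLine_inv (constantCoeff_denominator_ne_zero d)]
  have h (j : Fin 4) : toLine (∏ m ∈ Finset.Icc 1 (d j), (MvPowerSeries.X j + Cc (m : ℚ)) ^ n) =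
      (∏ r ∈ Finset.range (d j), (C (slope j) * X + ((r + 1 : ℕ) : ℚ⟦X⟧))) ^ 7 := by
    rw [map_prod, prod_Icc_eq, ← Finset.prod_pow]
    refine Finset.prod_congr rfl fun r _ => ?_
    rw [map_pow, map_add, toLine_X, toLine_Cc, n, map_natCast]
  rw [map_prod, Finset.prod_congr rfl fun j _ => h j]
  simp only [Fin.prod_univ_four, PowerSeries.mul_inv_rev]
  ring

theorem toLine_numerator {N : ℕ} {d : Fin 4 → ℕ} (hd : d ∈ level N) :
    toLine (ws.map fun w =>
      ∏ m ∈ Finset.Icc 1 (∑ j, w j * d j),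
        ((∑ j, Cc ((w j : ℚ)) * MvPowerSeries.X j) + Cc (m : ℚ))).prod =
      (N.factorial : ℚ⟦X⟧) *
        ∏ j, (∏ r ∈ Finset.range (N - d j), (((r + 1 : ℕ) : ℚ⟦X⟧) - C (slope j) * X)) ^ 2 := by
  have key (w : Fin 4 → ℕ) (M : ℕ) (g : ℚ⟦X⟧) (hM : ∑ j, w j * d j = M)
      (hg : ∑ j, C (w j : ℚ) * (C (slope j) * X) = g) :
      toLine (∏ m ∈ Finset.Icc 1 (∑ j, w j * d j),
        ((∑ j, Cc ((w j : ℚ)) * MvPowerSeries.X j) + Cc (m : ℚ))) =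
      ∏ r ∈ Finset.range M, (((r + 1 : ℕ) : ℚ⟦X⟧) + g) := by
    rw [map_prod, prod_Icc_eq, hM]
    refine Finset.prod_congr rfl fun r _ => ?_
    simp only [map_add, map_sum, map_mul, toLine_X, toLine_Cc]
    rw [hg, map_natCast, add_comm]
  have hN := mem_level.1 hd
  rw [Fin.sum_univ_four] at hN
  have k3 := key ![1, 1, 1, 0] (N - d 3) (-(C (slope 3) * X))
    (by simp [Fin.sum_univ_four]; omega) (by simp [Fin.sum_univ_four, slope])
  have k2 := key ![1, 1, 0, 1] (N - d 2) (-(C (slope 2) * X))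
    (by simp [Fin.sum_univ_four]; omega) (by simp [Fin.sum_univ_four, slope])
  have k1 := key ![1, 0, 1, 1] (N - d 1) (-(C (slope 1) * X))
    (by simp [Fin.sum_univ_four]; omega) (by simp [Fin.sum_univ_four, slope])
  have k0 := key ![0, 1, 1, 1] (N - d 0) (-(C (slope 0) * X))
    (by simp [Fin.sum_univ_four]; omega) (by simp [Fin.sum_univ_four, slope])
  have kk := key ![1, 1, 1, 1] N 0
    (by simp [Fin.sum_univ_four]; omega) (by simp [Fin.sum_univ_four, slope])
  have hf : ∏ r ∈ Finset.range N, (((r + 1 : ℕ) : ℚ⟦X⟧) + 0) = (N.factorial : ℚ⟦X⟧) := by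
    rw [← Finset.prod_range_add_one_eq_factorial, Nat.cast_prod]
    simp only [add_zero]
  rw [hf] at kk
  simp only [ws, List.map_cons, List.map_nil, List.prod_cons, List.prod_nil, map_mul, map_one,
    k0, k1, k2, k3, kk, Fin.prod_univ_four, ← sub_eq_add_neg]
  ring

theorem prod_range_succ_mul (z : ℚ⟦X⟧) (N : ℕ) :
    (∏ r ∈ Finset.range N, (((r + 1 : ℕ) : ℚ⟦X⟧) - z)) * z =
      -((∏ r ∈ Finset.range N, ((r : ℚ⟦X⟧) - z)) * (N - z)) := by
  rw [← Finset.prod_range_succ (fun r : ℕ => (r : ℚ⟦X⟧) - z), Finset.prod_range_succ']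
  simp

theorem toLine_T {N : ℕ} {d : Fin 4 → ℕ} (hd : d ∈ level N) :
    toLine (T d) * (16 * X ^ 8) = (N.factorial : ℚ⟦X⟧) * mainTerm N d := by
  have h1 : toLine (∏ p ∈ pairs,
      (MvPowerSeries.X p.1 - MvPowerSeries.X p.2 + Cc ((d p.1 : ℚ) - (d p.2 : ℚ)))) =
      vdm (pt d) := by
    rw [prod_pairs]
    simp only [map_mul, map_add, map_sub, toLine_X, toLine_Cc, vdm, pt, map_natCast]
    ring
  have h2 : (16 * X ^ 8 : ℚ⟦X⟧) = (∏ j, C (slope j) * X) ^ 2 := by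
    simp [Fin.prod_univ_four, slope, map_ofNat (C : ℚ →+* ℚ⟦X⟧)]
    ring
  have h3 : (∏ j, (∏ r ∈ Finset.range (N - d j), (((r + 1 : ℕ) : ℚ⟦X⟧) - C (slope j) * X)) ^ 2) *
      (∏ j, C (slope j) * X) ^ 2 = (∏ j, (N - pt d j)) ^ 2 *
        ∏ j, (∏ r ∈ Finset.range (N - d j), ((r : ℚ⟦X⟧) - C (slope j) * X)) ^ 2 := by
    rw [← Finset.prod_pow, ← Finset.prod_pow, ← Finset.prod_mul_distrib,
      ← Finset.prod_mul_distrib]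
    refine Finset.prod_congr rfl fun j _ => ?_
    rw [← mul_pow, prod_range_succ_mul, pt, Nat.cast_sub (le_of_mem_level hd j)]
    ring
  simp only [mainTerm, weight, wt]
  rw [Finset.prod_mul_distrib, T, map_mul, map_mul, h1, toLine_numerator hd, toLine_denominator, h2,
    ← prod_sub_eq _ (sum_pt hd)]
  linear_combination vdm (pt d) * (N.factorial : ℚ⟦X⟧) *
    (∏ j, ((∏ r ∈ Finset.range (d j), (C (slope j) * X + ((r + 1 : ℕ) : ℚ⟦X⟧))) ^ 7)⁻¹) * h3

theorem period_eq {N : ℕ} {G : R} (hG : F N = Vand * G) :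
    period N = 1152 * MvPowerSeries.constantCoeff G := by
  have h : toLine (F N) * (16 * X ^ 8) = C (N.factorial : ℚ) * ∑ d ∈ level N, mainTerm N d := by
    rw [map_natCast, F, map_sum, Finset.sum_mul, Finset.mul_sum]
    exact Finset.sum_congr rfl fun d hd => toLine_T hd
  rw [hG, map_mul, toLine_Vand] at h
  rw [period, mainSum, ← coeff_C_mul, ← h, ← constantCoeff_toLine,
    show 72 * X ^ 6 * toLine G * (16 * X ^ 8) = C (1152 : ℚ) * (toLine G * X ^ 14) by
      rw [map_ofNat (C : ℚ →+* ℚ⟦X⟧)]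
      ring, coeff_C_mul]
  simpa using coeff_mul_X_pow (toLine G) 14 0

end Specialization

section Divisibility

open MvPowerSeries

theorem hasSubst_update (j : Fin 4) {v : R} (hv : constantCoeff v = 0) :
    HasSubst (Function.update (X : Fin 4 → R) j v) :=
  hasSubst_of_constantCoeff_zero fun a => by
    by_cases h : a = j
    · subst h
      simpa using hv
    · simp [h]

theorem coeff_subst_update_zero {j : Fin 4} (g : R) {e : Fin 4 →₀ ℕ} (he : e j = 0) :
    coeff e (subst (Function.update (X : Fin 4 → R) j 0) g) = coeff e g := by
  classical
  rw [coeff_subst (hasSubst_update j (map_zero _))]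
  have hprod (d : Fin 4 →₀ ℕ) (hd : d j = 0) :
      (d.prod fun s m => Function.update (X : Fin 4 → R) j 0 s ^ m) = monomial d 1 := by
    rw [monomial_one_eq]
    refine Finsupp.prod_congr fun s hs => ?_
    rw [Function.update_of_ne]
    rintro rfl
    exact (Finsupp.mem_support_iff.1 hs) hd
  rw [finsum_eq_single _ e]
  · rw [hprod e he, coeff_monomial_same, smul_eq_mul, mul_one]
  · intro d hde
    by_cases hd : d j = 0
    · rw [hprod d hd, coeff_monomial_ne (Ne.symm hde), smul_zero]
    · rw [Finsupp.prod, Finset.prod_eq_zero (Finsupp.mem_support_iff.2 hd), map_zero, smul_zero]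
      simp [hd]

/-- The substitution `X j ↦ X i`. -/
def identify (i j : Fin 4) : R →ₐ[ℚ] R :=
  substAlgHom (hasSubst_update j (v := X i) (constantCoeff_X i))

theorem identify_X (i j a : Fin 4) :
    identify i j (X a) = X (if a = j then i else a) := by
  rw [identify, substAlgHom_X]
  by_cases h : a = j <;> simp [h]

theorem X_sub_X_dvd {i j : Fin 4} (hij : i ≠ j) {f : R} (hf : identify i j f = 0) :
    (X i - X j : R) ∣ f := by
  have hs := hasSubst_update j (v := X j + X i) (by simp)
  have hs' := hasSubst_update j (v := X j - X i) (by simp)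
  have h0 := hasSubst_update j (v := 0) (map_zero _)
  have hX : (X j : R) ∣ substAlgHom hs f := by
    rw [X_dvd_iff]
    intro e he
    have hcomp : (fun s => subst (Function.update (X : Fin 4 → R) j 0)
        (Function.update (X : Fin 4 → R) j (X j + X i) s)) = Function.update X j (X i) := by
      funext a
      by_cases h : a = j
      · subst h
        simp [subst_add h0, subst_X h0, hij]
      · simp [h, subst_X h0]
    rw [← coeff_subst_update_zero _ he, substAlgHom_apply, subst_comp_subst_apply hs h0, hcomp]
    rw [identify, substAlgHom_apply] at hf
    rw [hf, map_zero]
  have hback : substAlgHom hs' (substAlgHom hs f) = f := by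
    have hcomp : (fun s => subst (Function.update (X : Fin 4 → R) j (X j - X i))
        (Function.update (X : Fin 4 → R) j (X j + X i) s)) = X := by
      funext a
      by_cases h : a = j
      · subst h
        simp [subst_add hs', subst_X hs', hij]
      · simp [h, subst_X hs']
    rw [substAlgHom_apply, substAlgHom_apply, subst_comp_subst_apply hs hs', hcomp, subst_self,
      id]
  rw [← hback, ← neg_dvd, neg_sub]
  refine dvd_trans ?_ (map_dvd (substAlgHom hs') hX)
  rw [substAlgHom_X, Function.update_self]

theorem vdm_comp_swap {A : Type*} [CommRing A] (y : Fin 4 → A) {i j : Fin 4} (hij : i ≠ j) :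
    vdm (y ∘ Equiv.swap i j) = -vdm y := by
  fin_cases i <;> fin_cases j <;>
    first
    | exact absurd rfl hij
    | (simp [vdm, Equiv.swap_apply_def]; ring)

theorem ws_map_comp_swap (i j : Fin 4) : (ws.map fun w => w ∘ Equiv.swap i j).Perm ws := by
  revert i j
  decide

theorem identify_Cc (i j : Fin 4) (a : ℚ) : identify i j (Cc a) = Cc a :=
  (identify i j).commutes a

theorem identify_T_comp_swap {i j : Fin 4} (hij : i ≠ j) (d : Fin 4 → ℕ) :
    identify i j (T (d ∘ Equiv.swap i j)) = -identify i j (T d) := by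
  have hr (a : Fin 4) : (if Equiv.swap i j a = j then i else Equiv.swap i j a) =
      if a = j then i else a := by
    rw [Equiv.swap_apply_def]
    split_ifs <;> simp_all
  have hX (a : Fin 4) : identify i j (X (Equiv.swap i j a)) = identify i j (X a) := by
    rw [identify_X, identify_X, hr]
  have hv (d : Fin 4 → ℕ) : identify i j (∏ p ∈ pairs,
      (X p.1 - X p.2 + Cc ((d p.1 : ℚ) - (d p.2 : ℚ)))) =
      vdm fun a => identify i j (X a) + Cc (d a : ℚ) := by
    have hC (x y : ℚ) : Cc (x - y) = Cc x - Cc y := map_sub (C : ℚ →+* R) x y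
    rw [prod_pairs]
    simp only [map_mul, map_add, map_sub, hC, identify_Cc, vdm]
    ring
  have hvand : (vdm fun a => identify i j (X a) + Cc ((d ∘ Equiv.swap i j) a : ℚ)) =
      -vdm fun a => identify i j (X a) + Cc (d a : ℚ) := by
    rw [← vdm_comp_swap _ hij]
    congr 1
    funext a
    simp only [Function.comp, hX]
  have hnum : identify i j (ws.map fun w =>
      ∏ m ∈ Finset.Icc 1 (∑ a, w a * (d ∘ Equiv.swap i j) a),
        ((∑ a, Cc ((w a : ℚ)) * X a) + Cc (m : ℚ))).prod =
      identify i j (ws.map fun w => ∏ m ∈ Finset.Icc 1 (∑ a, w a * d a),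
        ((∑ a, Cc ((w a : ℚ)) * X a) + Cc (m : ℚ))).prod := by
    rw [map_list_prod, map_list_prod, List.map_map, List.map_map,
      ← ((ws_map_comp_swap i j).map _).prod_eq, List.map_map]
    refine congrArg List.prod (List.map_congr_left fun w _ => ?_)
    have h1 : ∑ a, (w ∘ Equiv.swap i j) a * (d ∘ Equiv.swap i j) a = ∑ a, w a * d a :=
      Equiv.sum_comp (Equiv.swap i j) fun a => w a * d a
    have h2 : ∑ a, Cc (w a : ℚ) * identify i j (X a) =
        ∑ a, Cc ((w ∘ Equiv.swap i j) a : ℚ) * identify i j (X a) := by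
      rw [← Equiv.sum_comp (Equiv.swap i j)]
      simp only [Function.comp, hX]
    simp only [Function.comp_apply, map_prod, map_add, map_sum, map_mul, identify_Cc]
    simp only [Function.comp_apply] at h1 h2
    rw [h1, ← h2]
  have hden : identify i j
      (∏ a, ∏ m ∈ Finset.Icc 1 ((d ∘ Equiv.swap i j) a), (X a + Cc (m : ℚ)) ^ n) =
      identify i j (∏ a, ∏ m ∈ Finset.Icc 1 (d a), (X a + Cc (m : ℚ)) ^ n) := by
    simp only [map_prod, map_pow, map_add, identify_Cc]
    rw [← Equiv.prod_comp (Equiv.swap i j)]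
    simp [hX]
  have hinv (d : Fin 4 → ℕ) : identify i j
      (∏ a, ∏ m ∈ Finset.Icc 1 (d a), (X a + Cc (m : ℚ)) ^ n) * identify i j
      (∏ a, ∏ m ∈ Finset.Icc 1 (d a), (X a + Cc (m : ℚ)) ^ n)⁻¹ = 1 := by
    rw [← map_mul, MvPowerSeries.mul_inv_cancel _ (constantCoeff_denominator_ne_zero d), map_one]
  have hden' := inv_unique (hden ▸ hinv (d ∘ Equiv.swap i j)) (hinv d)
  rw [T, T, map_mul, map_mul, map_mul, map_mul, hv, hv, hvand, hnum, hden',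
    neg_mul, neg_mul]

theorem identify_F {i j : Fin 4} (hij : i ≠ j) (N : ℕ) : identify i j (F N) = 0 := by
  have h : identify i j (F N) = -identify i j (F N) := by
    calc identify i j (F N) = ∑ d ∈ level N, identify i j (T d) := map_sum _ _ _
      _ = ∑ d ∈ level N, identify i j (T (d ∘ Equiv.swap i j)) := by
        refine Finset.sum_nbij' (fun d => d ∘ Equiv.swap i j) (fun d => d ∘ Equiv.swap i j)
          ?_ ?_ ?_ ?_ ?_
        · intro d hd
          rw [mem_level] at hd ⊢
          rw [← hd]
          exact Equiv.sum_comp (Equiv.swap i j) d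
        · intro d hd
          rw [mem_level] at hd ⊢
          rw [← hd]
          exact Equiv.sum_comp (Equiv.swap i j) d
        · intro d _
          funext a
          simp
        · intro d _
          funext a
          simp
        · intro d _
          congr 2
          funext a
          simp
      _ = -identify i j (F N) := by
        rw [Finset.sum_congr rfl fun d _ => identify_T_comp_swap hij d, Finset.sum_neg_distrib,
          F, map_sum]
        rfl
  have h2 : (2 : ℚ) • identify i j (F N) = 0 := by
    rw [two_smul]
    exact add_eq_zero_iff_eq_neg.2 h
  exact (smul_eq_zero.1 h2).resolve_left two_ne_zero

theorem prod_X_sub_X_dvd {f : R} (hf : ∀ i j : Fin 4, i < j → identify i j f = 0) :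
    Vand ∣ f := by
  have key (s : Finset (Fin 4 × Fin 4)) (hs : s ⊆ pairs) :
      (∏ p ∈ s, (X p.1 - X p.2 : R)) ∣ f := by
    induction s using Finset.induction_on with
    | empty => simp
    | insert p s hp ih =>
      rw [Finset.insert_subset_iff] at hs
      obtain ⟨g, hg⟩ := ih hs.2
      have hlt {q : Fin 4 × Fin 4} (hq : q ∈ pairs) : q.1 < q.2 := (Finset.mem_filter.1 hq).2
      have hg0 : identify p.1 p.2 g = 0 := by
        have h := hf p.1 p.2 (hlt hs.1)
        rw [hg, map_mul, map_prod] at h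
        refine (mul_eq_zero.1 h).resolve_left (Finset.prod_ne_zero_iff.2 fun q hq => ?_)
        rw [map_sub, identify_X, identify_X, sub_ne_zero, Ne, X_inj]
        have h1 := hlt hs.1
        have h2 := hlt (hs.2 hq)
        have hne : q ≠ p := fun h => hp (h ▸ hq)
        rw [Ne, Prod.ext_iff] at hne
        split_ifs <;> omega
      obtain ⟨g', rfl⟩ := X_sub_X_dvd (hlt hs.1).ne hg0
      rw [Finset.prod_insert hp]
      exact ⟨g', by rw [hg]; ring⟩
  exact key pairs subset_rfl

end Divisibility

section Operator

open PowerSeries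

theorem coeff_th (f : ℚ⟦X⟧) (N : ℕ) : coeff N (th f) = N * coeff N f := by
  rw [th, coeff_mk]

theorem coeff_ofNat_mul (c : ℕ) [c.AtLeastTwo] (f : ℚ⟦X⟧) (N : ℕ) :
    coeff N ((ofNat(c) : ℚ⟦X⟧) * f) = (ofNat(c) : ℚ) * coeff N f := by
  rw [← coeff_C_mul, map_ofNat]

/-- The series obtained by applying the `k`-th coefficient of the operator to `f`. -/
def opSeries (f : ℚ⟦X⟧) (k : ℕ) : ℚ⟦X⟧ := mk fun N => opCoeff (N : ℚ) k * coeff N f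

theorem sum_X_pow_mul_opSeries {f : ℚ⟦X⟧}
    (hf : ∀ N, coeff N f = (-1) ^ N * (period N / 1152)) :
    ∑ k ∈ Finset.range 8, X ^ k * opSeries f k = 0 := by
  ext N
  have h := sum_opCoeff_mul_period N
  rw [map_zero, ← mul_zero ((-1) ^ N / 1152 : ℚ), ← h, map_sum, Finset.mul_sum]
  refine Finset.sum_congr rfl fun k _ => ?_
  rw [coeff_X_pow_mul', opSeries, coeff_mk, hf]
  split_ifs with hk
  · have hs : (-1 : ℚ) ^ N * (-1) ^ k = (-1) ^ (N - k) := by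
      rw [← Nat.sub_add_cancel hk, pow_add, Nat.add_sub_cancel, mul_assoc, ← mul_pow]
      norm_num
    rw [← hs]
    ring
  · rw [mul_zero]

end Operator

/-- every `F_δ` is divisible by the Vandermonde `Δ`, and the series
`I₀ = Σ a_δ q^δ` with `a_δ = (−1)^δ·(F_δ/Δ)(0)` is annihilated by the stated
Picard–Fuchs operator. -/
theorem stmt_12 :
    (∀ δ : ℕ, ∃ G : R, F δ = Vand * G) ∧
    (∀ G : ℕ → R, (∀ δ : ℕ, F δ = Vand * G δ) →
      ∀ I₀ : PowerSeries ℚ,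
        I₀ = PowerSeries.mk (fun δ => (-1 : ℚ) ^ δ * MvPowerSeries.constantCoeff (G δ)) →
        81 * th^[4] I₀ - 9 * PowerSeries.X * (317 * th^[4] I₀ + 520 * th^[3] I₀ + 431 * th^[2] I₀ + 171 * th I₀ + 27 * I₀) + PowerSeries.X ^ 2 * (6589 * th^[4] I₀ - 7616 * th^[3] I₀ - 31688 * th^[2] I₀ - 28251 * th I₀ - 8370 * I₀) - PowerSeries.X ^ 3 * (5521 * th^[4] I₀ + 21384 * th^[3] I₀ + 107223 * th^[2] I₀ + 138402 * th I₀ + 55782 * I₀) + PowerSeries.X ^ 4 * (21987 * th^[4] I₀ + 130752 * th^[3] I₀ + 152168 * th^[2] I₀ + 9194 * th I₀ - 39016 * I₀) - 19 * PowerSeries.X ^ 5 * ((fun g => th g + g) (293 * th^[3] I₀ - 7005 * th^[2] I₀ - 18780 * th I₀ - 12535 * I₀)) - 361 * PowerSeries.X ^ 6 * ((fun g => th g + g) ((fun g => th g + 2 * g) (137 * th^[2] I₀ + 357 * th I₀ + 223 * I₀))) - 6859 * PowerSeries.X ^ 7 * ((fun g => th g + g) ((fun g => th g + 2 * g) ((fun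 g => th g + 2 * g) ((fun g => th g + 3 * g) (I₀))))) = 0) := by
  refine ⟨fun δ => prod_X_sub_X_dvd fun i j hij => identify_F hij.ne δ, ?_⟩
  intro G hG I₀ hI
  have hz := sum_X_pow_mul_opSeries (f := I₀) fun N => by
    rw [hI, PowerSeries.coeff_mk, period_eq (hG N), mul_div_cancel_left₀ _ (by norm_num)]
  rw [← hz]
  have h0 : opSeries I₀ 0 = 81 * th^[4] I₀ := by
    ext N
    simp [opSeries, opCoeff, coeff_th, coeff_ofNat_mul]
    ring
  have h1 : opSeries I₀ 1 = -(9 * (317 * th^[4] I₀ + 520 * th^[3] I₀ + 431 * th^[2] I₀ + 171 * th I₀ + 27 * I₀)) := by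
    ext N
    simp [opSeries, opCoeff, coeff_th, coeff_ofNat_mul]
    ring
  have h2 : opSeries I₀ 2 = 6589 * th^[4] I₀ - 7616 * th^[3] I₀ - 31688 * th^[2] I₀ - 28251 * th I₀ - 8370 * I₀ := by
    ext N
    simp [opSeries, opCoeff, coeff_th, coeff_ofNat_mul]
    ring
  have h3 : opSeries I₀ 3 = -(5521 * th^[4] I₀ + 21384 * th^[3] I₀ + 107223 * th^[2] I₀ + 138402 * th I₀ + 55782 * I₀) := by
    ext N
    simp [opSeries, opCoeff, coeff_th, coeff_ofNat_mul]
    ring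
  have h4 : opSeries I₀ 4 = 21987 * th^[4] I₀ + 130752 * th^[3] I₀ + 152168 * th^[2] I₀ + 9194 * th I₀ - 39016 * I₀ := by
    ext N
    simp [opSeries, opCoeff, coeff_th, coeff_ofNat_mul]
    ring
  have h5 : opSeries I₀ 5 = -(19 * ((fun g => th g + g)
      (293 * th^[3] I₀ - 7005 * th^[2] I₀ - 18780 * th I₀ - 12535 * I₀))) := by
    ext N
    simp [opSeries, opCoeff, coeff_th, coeff_ofNat_mul]
    ring
  have h6 : opSeries I₀ 6 = -(361 * ((fun g => th g + g) ((fun g => th g + 2 * g)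
      (137 * th^[2] I₀ + 357 * th I₀ + 223 * I₀)))) := by
    ext N
    simp [opSeries, opCoeff, coeff_th, coeff_ofNat_mul]
    ring
  have h7 : opSeries I₀ 7 = -(6859 * ((fun g => th g + g) ((fun g => th g + 2 * g) ((fun g => th g + 2 * g)
      ((fun g => th g + 3 * g) (I₀)))))) := by
    ext N
    simp [opSeries, opCoeff, coeff_th, coeff_ofNat_mul]
    ring
  simp only [Finset.sum_range_succ, Finset.sum_range_zero, h0, h1, h2, h3, h4, h5, h6, h7]
  ring

end Stmt12
end
end

section
/- Take k = 3, n = 8 and the weight vectors (1,1,0), (1,0,1), (0,1,1) each taken four times in the Vandermonde-quotient construction. Then for every δ ≥ 0 the power series F_δ ∈ ℚ[[x₁,x₂,x₃]] is divisible by Δ = (x₁−x₂)(x₁−x₃)(x₂−x₃), and the resulting series I₀(q) = Σ_{δ≥0} a_δ q^δ with a_δ = (F_δ/Δ)(0) satisfies {529θ⁴ − 23q(850θ⁴+1634θ³+1461θ²+644θ+115) + q²(140191θ⁴+504286θ³+765193θ²+554484θ+160080) − 2q³(225598θ⁴+1145682θ³+2338529θ²+2203584θ+805023) + q⁴(739023θ⁴+4533564θ³+11008538θ²+12265136θ+5219792)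 − q⁵(683438θ⁴+4503734θ³+11576207θ²+13658100θ+6109137) + q⁶(392337θ⁴+2558982θ³+6275869θ²+6925308θ+2877864) − 4q⁷(36774θ⁴+235086θ³+558499θ²+579748θ+221197) + 16q⁸(2081θ⁴+12548θ³+28814θ²+29364θ+11133) − 256q⁹(2θ+3)⁴} I₀ = 0. -/
noncomputable section
namespace Stmt13

/-- The multivariable power series ring `ℚ[[x₁,…,x_3]]`. -/
abbrev R := MvPowerSeries (Fin 3) ℚ

/-- The constant `a` in `R`. -/
def Cc (a : ℚ) : R := MvPowerSeries.C a

/-- The pairs `i < j`. -/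
def pairs : Finset (Fin 3 × Fin 3) := Finset.univ.filter fun p => p.1 < p.2

/-- The Vandermonde element `Δ = ∏_{i<j}(x_i − x_j)`. -/
def Vand : R := ∏ p ∈ pairs, (MvPowerSeries.X p.1 - MvPowerSeries.X p.2)

/-- The weight vectors. -/
def ws : List (Fin 3 → ℕ) := [![1, 1, 0], ![1, 1, 0], ![1, 1, 0], ![1, 1, 0], ![1, 0, 1], ![1, 0, 1], ![1, 0, 1], ![1, 0, 1], ![0, 1, 1], ![0, 1, 1], ![0, 1, 1], ![0, 1, 1]]

/-- `n = 8`. -/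
def n : ℕ := 8

/-- The term `T_d` of the Vandermonde-quotient construction:
`T_d = ∏_{i<j}(x_i−x_j+d_i−d_j) · ∏_s ∏_{m=1}^{⟨wˢ,d⟩}(⟨wˢ,x⟩+m) · u_d⁻¹`. -/
def T (d : Fin 3 → ℕ) : R :=
  (∏ p ∈ pairs,
      (MvPowerSeries.X p.1 - MvPowerSeries.X p.2 + Cc ((d p.1 : ℚ) - (d p.2 : ℚ)))) *
    (ws.map fun w =>
      ∏ m ∈ Finset.Icc 1 (∑ j, w j * d j),
        ((∑ j, Cc ((w j : ℚ)) * MvPowerSeries.X j) + Cc (m : ℚ))).prod *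
    (∏ j, ∏ m ∈ Finset.Icc 1 (d j), (MvPowerSeries.X j + Cc (m : ℚ)) ^ n)⁻¹

/-- `F_δ = Σ_{d₁+⋯+d_k=δ} T_d`. -/
def F (δ : ℕ) : R :=
  ∑ d ∈ (Fintype.piFinset fun _ : Fin 3 => Finset.range (δ + 1)).filter
      (fun d => ∑ j, d j = δ), T d

/-- The Euler operator `θ = q·d/dq` on `ℚ[[q]]`. -/
def th (f : PowerSeries ℚ) : PowerSeries ℚ :=
  PowerSeries.mk fun d => (d : ℚ) * PowerSeries.coeff d f

/-- The coefficients of the telescoping certificates: the entry `(c, i, j)` in position `m` of the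
`k`-th list stands for the monomial `c x ^ m y ^ i z ^ j`. -/
def certData : ℕ → List (List (ℕ × ℕ × ℕ))
  | 0 =>
    [[(271906, 5, 6), (376648, 4, 7), (983040, 3, 8)], [(671830, 4, 6), (596712, 3, 7), (186208,
    2, 8)], [(336444, 4, 5), (623162, 3, 6), (375590, 2, 7), (96278, 1, 8), (7406, 0, 9)],
    [(292008, 3, 5), (275080, 2, 6), (105800, 1, 7), (14812, 0, 8)], [(58190, 3, 4), (103155, 2,
    5), (55545, 1, 6), (10580, 0, 7)], [(18515, 2, 4), (14812, 1, 5), (3703, 0, 6)], [(1058, 2,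
    3), (1587, 1, 4), (529, 0, 5)]]
  | 1 =>
    [[(18630, 4, 5), (32775, 3, 6), (203849, 4, 6), (2831340, 5, 6), (15525, 2, 7), (170660, 3,
    7), (4213982, 4, 7)], [(81420, 3, 5), (464600, 4, 5), (69000, 2, 6), (791706, 3, 6),
    (4869330, 4, 6), (20700, 1, 7), (390310, 2, 7), (4002920, 3, 7), (1380, 0, 8), (63204, 1,
    8), (1067890, 2, 8)], [(54855, 3, 4), (93150, 2, 5), (1125390, 3, 5), (6247086, 5, 4),
    (45540, 1, 6), (985642, 2, 6), (8292918, 6, 3), (7245, 0, 7), (322598, 1, 7), (1299574, 7,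
    2), (30475, 0, 8), (767096, 1, 8), (20838, 0, 9)], [(46575, 2, 4), (602784, 3, 4), (37260,
    1, 5), (1058598, 2, 5), (11831600, 5, 3), (9315, 0, 6), (558762, 1, 6), (8895340, 6, 2),
    (102948, 0, 7), (1714960, 7, 1), (203550, 0, 8)], [(6900, 2, 3), (10350, 1, 4), (558785, 2,
    4), (997524, 4, 3), (3450, 0, 5), (447028, 1, 5), (2360541, 5, 2), (111757, 0, 6), (1939187,
    6, 1), (576170, 7, 0)], [(98440, 2, 3), (147660, 1, 4), (692185, 2, 4), (49220, 0, 5),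
    (553748, 1, 5), (138437, 0, 6)], [(38042, 2, 3), (57063, 1, 4), (19021, 0, 5)]]
  | 2 =>
    [[(814536, 4, 5), (1432980, 3, 6), (4127323, 4, 6), (677128, 5, 6), (678780, 2, 7),
    (3797500, 3, 7), (1809850, 4, 7)], [(3565344, 3, 5), (8484352, 4, 5), (3025080, 2, 6),
    (15339636, 3, 6), (20813420, 4, 6), (910560, 1, 7), (8597356, 2, 7), (19094928, 3, 7),
    (61716, 0, 8), (1742072, 1, 8), (6301352, 2, 8)], [(2414916, 3, 4), (4105800, 2, 5),
    (20548000, 3, 5), (36910776, 4, 5), (2013168, 1, 6), (18359368, 2, 6), (61832072, 3, 6),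
    (322284, 0, 7), (6304992, 1, 7), (29657176, 2, 7), (686060, 0, 8), (5054836, 1, 8), (318956,
    0, 9)], [(2077740, 2, 4), (9771096, 3, 4), (1662192, 1, 5), (16914348, 2, 5), (57394232, 3,
    5), (415548, 0, 6), (8648388, 1, 6), (49468160, 2, 6), (1505136, 0, 7), (15539160, 1, 7),
    (1268848, 0, 8)], [(312720, 2, 3), (469080, 1, 4), (6541645, 2, 4), (13186114, 3, 4),
    (156360, 0, 5), (5233316, 1, 5), (24277698, 2, 5), (1308329, 0, 6), (14090602, 1, 6),
    (2999018, 0, 7)], [(765232, 2, 3), (1147848, 1, 4), (3938270, 2, 4), (382616, 0, 5),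
    (3150616, 1, 5), (787654, 0, 6)], [(242340, 2, 3), (363510, 1, 4), (121170, 0, 5)]]
  | 3 =>
    [[(1447308, 4, 5), (2546190, 3, 6), (269917, 6, 4), (71364, 5, 6), (1206090, 2, 7), (818300,
    3, 7), (905162, 4, 7)], [(6566616, 3, 5), (1027544, 4, 5), (5722416, 2, 6), (5761560, 3, 6),
    (16024180, 4, 6), (1849464, 1, 7), (7547512, 2, 7), (15591248, 3, 7), (167544, 0, 8),
    (2813496, 1, 8), (5630252, 2, 8)], [(4985550, 3, 4), (8684604, 2, 5), (26644068, 3, 5),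
    (33109348, 4, 5), (4503240, 1, 6), (25463404, 2, 6), (56381968, 3, 6), (804186, 0, 7),
    (10069556, 1, 7), (28620600, 2, 7), (1481482, 0, 8), (5999992, 1, 8), (652012, 0, 9)],
    [(5428350, 2, 4), (25340088, 3, 4), (4342680, 1, 5), (43020648, 2, 5), (61870040, 3, 5),
    (1085670, 0, 6), (21020904, 1, 6), (56037560, 2, 6), (3340344, 0, 7), (19850040, 1, 7),
    (2336260, 0, 8)], [(1018728, 2, 3), (1528092, 1, 4), (24029705, 2, 4), (21228890, 3, 4),
    (509364, 0, 5), (19223764, 1, 5), (38881242, 2, 5), (4805941, 0, 6), (22344290, 1, 6),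
    (4691938, 0, 7)], [(3639280, 2, 3), (5458920, 1, 4), (11024970, 2, 4), (1819640, 0, 5),
    (8819976, 1, 5), (2204994, 0, 6)], [(660052, 2, 3), (990078, 1, 4), (330026, 0, 5)]]
  | 4 =>
    [[(239760, 5, 4), (421800, 6, 3), (1510615, 6, 4), (629290, 6, 5), (199800, 7, 2), (650860,
    7, 3), (451114, 7, 4)], [(619008, 5, 3), (2033896, 5, 4), (244752, 6, 2), (977292, 6, 3),
    (8450270, 4, 6), (162432, 1, 7), (2438972, 2, 7), (8585352, 3, 7), (89448, 0, 8), (1382368,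
    1, 8), (3287048, 2, 8)], [(580536, 3, 4), (1374192, 2, 5), (12595960, 3, 5), (22625964, 4,
    5), (1129248, 1, 6), (12958808, 2, 6), (38464030, 3, 6), (335592, 0, 7), (5812952, 1, 7),
    (19620962, 2, 7), (1029300, 0, 8), (4357526, 1, 8), (574630, 0, 9)], [(2616840, 2, 4),
    (16997976, 3, 4), (2093472, 1, 5), (29581644, 2, 5), (47497088, 3, 5), (523368, 0, 6),
    (15306788, 1, 6), (43828536, 2, 6), (2723120, 0, 7), (16163264, 1, 7), (2082452, 0, 8)],
    [(768864, 2, 3), (1153296, 1, 4), (21236975, 2, 4), (18995176, 3, 4), (384432, 0, 5),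
    (16989580, 1, 5), (34841811, 2, 5), (4247395, 0, 6), (20079333, 1, 6), (4232698, 0, 7)],
    [(4075584, 2, 3), (6113376, 1, 4), (11500375, 2, 4), (2037792, 0, 5), (9200300, 1, 5),
    (2300075, 0, 6)], [(817994, 2, 3), (1226991, 1, 4), (408997, 0, 5)]]
  | 5 =>
    [[(578178, 5, 4), (1017165, 6, 3), (818968, 6, 4), (246608, 6, 5), (481815, 7, 2), (507280,
    7, 3), (219760, 7, 4)], [(2597892, 5, 3), (1702960, 5, 4), (2247960, 6, 2), (2251602, 6, 3),
    (1951770, 4, 6), (713460, 7, 1), (346750, 7, 2), (2229064, 3, 7), (60588, 8, 0), (201892, 1,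
    8), (974546, 2, 8)], [(1915533, 4, 3), (3317130, 5, 2), (501950, 3, 5), (6874234, 4, 5),
    (1697484, 6, 1), (1485146, 2, 6), (12097014, 3, 6), (295887, 7, 0), (1338774, 1, 7),
    (6828686, 2, 7), (386995, 0, 8), (1917504, 1, 8), (311598, 0, 9)], [(1978245, 4, 2),
    (4568712, 3, 4), (1582596, 5, 1), (8620434, 2, 5), (18646968, 3, 5), (395649, 6, 0),
    (5229966, 1, 6), (18131924, 2, 6), (1178244, 0, 7), (7402936, 1, 7), (1147982, 0, 8)],
    [(356220, 3, 2), (534330, 4, 1), (9470930, 2, 4), (9923490, 3, 4), (178110, 5, 0), (7576744,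
    1, 5), (18129363, 2, 5), (1894186, 0, 6), (10368625, 1, 6), (2162752, 0, 7)], [(2322440, 2,
    3), (3483660, 1, 4), (7113165, 2, 4), (1161220, 0, 5), (5690532, 1, 5), (1422633, 0, 6)],
    [(548882, 2, 3), (823323, 1, 4), (274441, 0, 5)]]
  | 6 =>
    [[(70632, 5, 4), (124260, 6, 3), (143280, 6, 4), (73632, 6, 5), (58860, 7, 2), (115200, 7,
    3), (81568, 7, 4)], [(480000, 5, 3), (479544, 5, 4), (518568, 6, 2), (846408, 6, 3),
    (349920, 4, 6), (249792, 7, 1), (451592, 7, 2), (430208, 3, 7), (48060, 8, 0), (84728, 8,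
    1), (201472, 2, 8)], [(721908, 4, 3), (1381032, 5, 2), (1385896, 5, 3), (1679664, 4, 5),
    (857904, 6, 1), (906512, 6, 2), (3030864, 3, 6), (198780, 7, 0), (46088, 7, 1), (1828432, 2,
    7), (72216, 0, 8), (579472, 1, 8), (102240, 0, 9)], [(1461420, 4, 2), (93936, 3, 4),
    (1169136, 5, 1), (576360, 2, 5), (5518208, 3, 5), (292284, 6, 0), (772728, 1, 6), (5525920,
    2, 6), (290304, 0, 7), (2373760, 1, 7), (396912, 0, 8)], [(368784, 3, 2), (553176, 4, 1),
    (2321280, 2, 4), (3421200, 3, 4), (184392, 5, 0), (1857024, 1, 5), (6243576, 2, 5), (464256,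
    0, 6), (3563560, 1, 6), (741184, 0, 7)], [(748624, 2, 3), (1122936, 1, 4), (2687800, 2, 4),
    (374312, 0, 5), (2150240, 1, 5), (537560, 0, 6)], [(235792, 2, 3), (353688, 1, 4), (117896,
    0, 5)]]
  | 7 =>
    [[(3456, 4, 5), (6080, 3, 6), (20224, 4, 6), (1536, 6, 5), (2880, 2, 7), (10240, 3, 7),
    (1536, 7, 4)], [(5824, 5, 3), (48800, 5, 4), (18592, 6, 2), (133824, 6, 3), (3040, 6, 4),
    (17088, 7, 1), (125440, 7, 2), (11904, 3, 7), (4976, 8, 0), (40416, 8, 1), (11936, 2, 8)],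
    [(52608, 4, 3), (108288, 5, 2), (588864, 5, 3), (126368, 4, 5), (75264, 6, 1), (460384, 6,
    2), (273248, 3, 6), (19584, 7, 0), (105536, 7, 1), (230112, 2, 7), (3824, 0, 8), (103808, 1,
    8), (20576, 0, 9)], [(148320, 4, 2), (318528, 4, 3), (118656, 5, 1), (432576, 5, 2),
    (840064, 3, 5), (29664, 6, 0), (83904, 6, 1), (907072, 2, 6), (30144, 0, 7), (436608, 1, 7),
    (83936, 0, 8)], [(40576, 3, 2), (60864, 4, 1), (213280, 2, 4), (701728, 3, 4), (20288, 5,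
    0), (170624, 1, 5), (1276080, 2, 5), (42656, 0, 6), (723344, 1, 6), (148992, 0, 7)],
    [(126272, 2, 3), (189408, 1, 4), (613840, 2, 4), (63136, 0, 5), (491072, 1, 5), (122768, 0,
    6)], [(58400, 2, 3), (87600, 1, 4), (29200, 0, 5)]]
  | 8 =>
    [[], [(1024, 3, 5), (4608, 5, 4), (1536, 2, 6), (9216, 6, 3), (11520, 4, 6), (1024, 1, 7),
    (6144, 7, 2), (9216, 3, 7), (256, 0, 8), (1536, 8, 1), (2304, 2, 8)], [(3072, 3, 4), (6144,
    2, 5), (28672, 5, 3), (31744, 4, 5), (4096, 1, 6), (21504, 6, 2), (57856, 3, 6), (1024, 0,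
    7), (4096, 7, 1), (35328, 2, 7), (512, 0, 8), (11008, 1, 8), (1792, 0, 9)], [(7680, 2, 4),
    (12288, 4, 3), (6144, 1, 5), (15360, 5, 2), (111616, 3, 5), (1536, 0, 6), (1024, 6, 1),
    (113664, 2, 6), (2048, 0, 7), (50176, 1, 7), (8704, 0, 8)], [(2048, 2, 3), (3072, 1, 4),
    (15360, 2, 4), (78336, 3, 4), (1024, 0, 5), (12288, 1, 5), (142848, 2, 5), (3072, 0, 6),
    (81408, 1, 6), (16896, 0, 7)], [(7168, 2, 3), (10752, 1, 4), (70400, 2, 4), (3584, 0, 5),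
    (56320, 1, 5), (14080, 0, 6)], [(8192, 2, 3), (12288, 1, 4), (4096, 0, 5)]]
  | _ => []

/-- The coefficients of the recurrence, up to sign: the `k`-th list holds the coefficients of the
polynomial in `θ` that multiplies `(-q) ^ k`, constant term first. -/
def recData : ℕ → List ℕ
  | 0 => [0, 0, 0, 0, 529]
  | 1 => [2645, 14812, 33603, 37582, 19550]
  | 2 => [160080, 554484, 765193, 504286, 140191]
  | 3 => [1610046, 4407168, 4677058, 2291364, 451196]
  | 4 => [5219792, 12265136, 11008538, 4533564, 739023]
  | 5 => [6109137, 13658100, 11576207, 4503734, 683438]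
  | 6 => [2877864, 6925308, 6275869, 2558982, 392337]
  | 7 => [884788, 2318992, 2233996, 940344, 147096]
  | 8 => [178128, 469824, 461024, 200768, 33296]
  | 9 => [20736, 55296, 55296, 24576, 4096]
  | _ => []

section Certificate

variable {A A' : Type} [CommSemiring A] [CommSemiring A']

/-- The polynomial with coefficients `certData k`. -/
def cert (k : ℕ) (x y z : A) : A :=
  (certData k).foldr (fun l r => (l.map fun t => (t.1 : A) * y ^ t.2.1 * z ^ t.2.2).sum + x * r) 0

/-- The polynomial with coefficients `recData k`. -/
def recPoly (k : ℕ) (x : A) : A :=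
  (recData k).foldr (fun (c : ℕ) (r : A) => (c : A) + x * r) 0

/-- The certificate polynomial preceding `cert k`, shifted by one in `x`. -/
def shiftedCert : ℕ → A → A → A → A
  | 0, _, _, _ => 0
  | k + 1, x, y, z => cert k (x + 1) y z

/-- One of the three telescoping summands of the certificate identity. -/
def telescoper (k : ℕ) (x y z : A) : A :=
  x ^ 8 * cert k x y z + (x + y) ^ 4 * (x + z) ^ 4 * shiftedCert k x y z

/-- The subtraction-free form of one side of the certificate identity. -/
def certSide (k : ℕ) (a b c : A) : A :=
  recPoly k (a + b + c) * ((a + b) ^ 4 * (a + c) ^ 4 * (b + c) ^ 4) *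
      (a ^ 2 * b + b ^ 2 * c + c ^ 2 * a) +
    (telescoper k a b c + telescoper k b c a + telescoper k c a b)

lemma map_cert (f : A →+* A') (k : ℕ) (x y z : A) :
    f (cert k x y z) = cert k (f x) (f y) (f z) := by
  unfold cert
  induction certData k with
  | nil => simp
  | cons l L ih => simp [ih, map_list_sum, Function.comp_def]

lemma map_recPoly (f : A →+* A') (k : ℕ) (x : A) : f (recPoly k x) = recPoly k (f x) := by
  unfold recPoly
  induction recData k with
  | nil => simp
  | cons l L ih => simp [ih]

lemma map_shiftedCert (f : A →+* A') (k : ℕ) (x y z : A) :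
    f (shiftedCert k x y z) = shiftedCert k (f x) (f y) (f z) := by
  cases k <;> simp [shiftedCert, map_cert]

lemma map_certSide (f : A →+* A') (k : ℕ) (a b c : A) :
    f (certSide k a b c) = certSide k (f a) (f b) (f c) := by
  simp [certSide, telescoper, map_cert, map_recPoly, map_shiftedCert]

end Certificate

section Kronecker

open Polynomial

lemma eval_one_divX_le (p : ℕ[X]) : p.divX.eval 1 ≤ p.eval 1 := by
  conv_rhs => rw [← divX_mul_X_add p]
  simp

/-- A polynomial with natural number coefficients is determined by its value at an integer larger
than the sum of its coefficients. -/
lemma eq_of_eval_eq_of_eval_one_lt {p q : ℕ[X]} {B : ℕ} (hp : p.eval 1 < B) (hq : q.eval 1 < B)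
    (h : p.eval B = q.eval B) : p = q := by
  ext n
  induction n generalizing p q with
  | zero =>
    have key : ∀ r : ℕ[X], r.eval 1 < B → r.eval B % B = r.coeff 0 := by
      intro r hr
      have h1 : r.eval 1 = r.divX.eval 1 + r.coeff 0 := by
        conv_lhs => rw [← divX_mul_X_add r]
        simp
      conv_lhs => rw [← divX_mul_X_add r]
      simp only [eval_add, eval_mul, eval_X, eval_C, Nat.mul_add_mod_self_right]
      exact Nat.mod_eq_of_lt (by omega)
    rw [← key p hp, ← key q hq, h]
  | succ n ih =>
    have key : ∀ r : ℕ[X], r.eval 1 < B → r.eval B / B = r.divX.eval B := by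
      intro r hr
      have h1 : r.eval 1 = r.divX.eval 1 + r.coeff 0 := by
        conv_lhs => rw [← divX_mul_X_add r]
        simp
      conv_lhs => rw [← divX_mul_X_add r]
      simp only [eval_add, eval_mul, eval_X, eval_C]
      rw [Nat.mul_comm, Nat.mul_add_div (by omega), Nat.div_eq_of_lt (by omega), add_zero]
    rw [← coeff_divX, ← coeff_divX]
    refine ih ((eval_one_divX_le p).trans_lt hp) ((eval_one_divX_le q).trans_lt hq) ?_
    rw [← key p hp, ← key q hq, h]

lemma coeff_le_eval_one {σ : Type} (p : MvPolynomial σ ℕ) (m : σ →₀ ℕ) :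
    p.coeff m ≤ MvPolynomial.eval (fun _ => 1) p := by
  rw [MvPolynomial.eval_eq]
  simp only [one_pow, Finset.prod_const_one, mul_one]
  by_cases hm : m ∈ p.support
  · exact Finset.single_le_sum (f := fun d => p.coeff d) (fun _ _ => Nat.zero_le _) hm
  · simp [MvPolynomial.notMem_support_iff.mp hm]

/-- The multivariate form of `eq_of_eval_eq_of_eval_one_lt`, specializing one variable. -/
lemma mvPolynomial_eq_of_map_eval_eq {σ : Type} {p q : MvPolynomial σ ℕ[X]} {B : ℕ}
    (hp : MvPolynomial.eval (fun _ => 1) (MvPolynomial.map (evalRingHom 1) p) < B)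
    (hq : MvPolynomial.eval (fun _ => 1) (MvPolynomial.map (evalRingHom 1) q) < B)
    (h : MvPolynomial.map (evalRingHom B) p = MvPolynomial.map (evalRingHom B) q) : p = q := by
  ext1 m
  have key : ∀ r : MvPolynomial σ ℕ[X],
      MvPolynomial.eval (fun _ => 1) (MvPolynomial.map (evalRingHom 1) r) < B →
      (r.coeff m).eval 1 < B := fun r hr => by
    simpa [MvPolynomial.coeff_map] using (coeff_le_eval_one _ m).trans_lt hr
  refine eq_of_eval_eq_of_eval_one_lt (key p hp) (key q hq) ?_
  simpa [MvPolynomial.coeff_map] using congrArg (MvPolynomial.coeff m) h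

variable {A : Type} [CommSemiring A]

lemma certSide_swap_of_eval {k B₁ B₂ B₃ : ℕ} (h₁ : certSide k 1 1 1 < B₁)
    (h₂ : certSide k B₁ 1 1 < B₂) (h₃ : certSide k B₁ B₂ 1 < B₃) (h₃' : certSide k B₁ 1 B₂ < B₃)
    (h : certSide k B₁ B₂ B₃ = certSide k B₁ B₃ B₂) (a b c : A) :
    certSide k a b c = certSide k a c b := by
  have s₁ : certSide k (B₁ : ℕ[X]) B₂ X = certSide k (B₁ : ℕ[X]) X B₂ := by
    apply eq_of_eval_eq_of_eval_one_lt (B := B₃)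
    · rw [← coe_evalRingHom, map_certSide]; simpa using h₃
    · rw [← coe_evalRingHom, map_certSide]; simpa using h₃'
    · rw [← coe_evalRingHom, map_certSide, map_certSide]; simpa using h
  have s₂ : certSide k (B₁ : MvPolynomial Unit ℕ[X]) (MvPolynomial.C X) (MvPolynomial.X ()) =
      certSide k (B₁ : MvPolynomial Unit ℕ[X]) (MvPolynomial.X ()) (MvPolynomial.C X) := by
    apply mvPolynomial_eq_of_map_eval_eq (B := B₂)
    · rw [map_certSide, map_certSide]; simpa using h₂
    · rw [map_certSide, map_certSide]; simpa using h₂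
    · have := congrArg (eval₂RingHom (Nat.castRingHom (MvPolynomial Unit ℕ))
        (MvPolynomial.X ())) s₁
      rw [map_certSide, map_certSide] at this ⊢
      simpa using this
  have s₃ : certSide k (MvPolynomial.C X : MvPolynomial (Fin 2) ℕ[X]) (MvPolynomial.X 0)
        (MvPolynomial.X 1) =
      certSide k (MvPolynomial.C X) (MvPolynomial.X 1) (MvPolynomial.X 0) := by
    apply mvPolynomial_eq_of_map_eval_eq (B := B₁)
    · rw [map_certSide, map_certSide]; simpa using h₁
    · rw [map_certSide, map_certSide]; simpa using h₁
    · have := congrArg (MvPolynomial.eval₂Hom (eval₂RingHom (Nat.castRingHom _)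
        (MvPolynomial.X 0)) fun _ => (MvPolynomial.X 1 : MvPolynomial (Fin 2) ℕ)) s₂
      rw [map_certSide, map_certSide] at this ⊢
      simpa using this
  have := congrArg (MvPolynomial.eval₂Hom (eval₂RingHom (Nat.castRingHom A) a) ![b, c]) s₃
  rw [map_certSide, map_certSide] at this
  simpa using this

lemma certSide_swap (k : ℕ) (a b c : A) : certSide k a b c = certSide k a c b := by
  by_cases hk : k < 10
  · have key : ∀ k < 10, certSide k 1 1 1 < 2 ^ 64 ∧ certSide k (2 ^ 64) 1 1 < 2 ^ 1500 ∧
        certSide k (2 ^ 64) (2 ^ 1500) 1 < 2 ^ 32000 ∧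
        certSide k (2 ^ 64) 1 (2 ^ 1500) < 2 ^ 32000 ∧
        certSide k (2 ^ 64) (2 ^ 1500) (2 ^ 32000) =
          certSide k (2 ^ 64) (2 ^ 32000) (2 ^ 1500) := by
      decide +kernel
    obtain ⟨h₁, h₂, h₃, h₃', h⟩ := key k hk
    exact certSide_swap_of_eval h₁ h₂ h₃ h₃' h a b c
  · obtain ⟨k, rfl⟩ := Nat.exists_eq_add_of_le (not_lt.mp hk)
    rw [show 10 + k = k + 9 + 1 by omega]
    simp [certSide, telescoper, recPoly, shiftedCert, cert, certData, recData]

end Kronecker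

section CertificateRing

variable {A : Type} [CommRing A]

/-- The telescoping certificate, alternating in its last two arguments. -/
def altCert (k : ℕ) (x y z : A) : A := cert k x z y - cert k x y z

/-- The Euler class `∏_{i<j} (x_i + x_j) ^ 4`. -/
def euler (a b c : A) : A := (a + b) ^ 4 * (a + c) ^ 4 * (b + c) ^ 4

lemma recPoly_zero_mul_euler (a b c : A) :
    recPoly 0 (a + b + c) * euler a b c * ((a - b) * (a - c) * (b - c)) =
      a ^ 8 * altCert 0 a b c + b ^ 8 * altCert 0 b c a + c ^ 8 * altCert 0 c a b := by
  have h := certSide_swap 0 a b c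
  simp only [certSide, telescoper, shiftedCert, mul_zero, add_zero] at h
  rw [show a + c + b = a + b + c by ring] at h
  simp only [altCert, euler]
  linear_combination h

lemma recPoly_succ_mul_euler (k : ℕ) (a b c : A) :
    recPoly (k + 1) (a + b + c) * euler a b c * ((a - b) * (a - c) * (b - c)) =
      (a ^ 8 * altCert (k + 1) a b c + b ^ 8 * altCert (k + 1) b c a +
          c ^ 8 * altCert (k + 1) c a b) +
        ((a + b) ^ 4 * (a + c) ^ 4 * altCert k (a + 1) b c +
          (b + c) ^ 4 * (b + a) ^ 4 * altCert k (b + 1) c a +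
          (c + a) ^ 4 * (c + b) ^ 4 * altCert k (c + 1) a b) := by
  have h := certSide_swap (k + 1) a b c
  simp only [certSide, telescoper, shiftedCert] at h
  rw [show a + c + b = a + b + c by ring] at h
  simp only [altCert, euler]
  linear_combination h

end CertificateRing

section Telescoping

open MvPowerSeries

/-- The shifted variable `x_j + d_j`. -/
def pt (d : Fin 3 → ℕ) (j : Fin 3) : R := X j + Cc (d j)

/-- The denominator of `T d`. -/
def den (d : Fin 3 → ℕ) : R := ∏ j, ∏ m ∈ Finset.Icc 1 (d j), (X j + Cc (m : ℚ)) ^ n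

/-- The hypergeometric part of `T d`, with the Euler class cleared from the denominator. -/
def hyp (d : Fin 3 → ℕ) : R :=
  (∏ i, ∏ m ∈ Finset.range (d i + d (i + 1)), (X i + X (i + 1) + Cc (m : ℚ))) ^ 4 * (den d)⁻¹

lemma Cc_add (a b : ℚ) : Cc (a + b) = Cc a + Cc b := map_add C a b

lemma Cc_sub (a b : ℚ) : Cc (a - b) = Cc a - Cc b := map_sub C a b

lemma Cc_zero : Cc 0 = 0 := map_zero C

lemma Cc_one : Cc 1 = 1 := map_one C

lemma mul_prod_Icc (l : R) (N : ℕ) :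
    l * ∏ m ∈ Finset.Icc 1 N, (l + Cc (m : ℚ)) =
      (∏ m ∈ Finset.range N, (l + Cc (m : ℚ))) * (l + Cc (N : ℚ)) := by
  induction N with
  | zero => simp [Cc_zero]
  | succ N ih =>
    rw [Finset.prod_Icc_succ_top (by omega), ← mul_assoc, ih, Finset.prod_range_succ]

lemma pairs_eq : pairs = {(0, 1), (0, 2), (1, 2)} := by decide

lemma T_eq (d : Fin 3 → ℕ) :
    T d = (pt d 0 - pt d 1) * (pt d 0 - pt d 2) * (pt d 1 - pt d 2) *
      ((∏ m ∈ Finset.Icc 1 (d 0 + d 1), (X 0 + X 1 + Cc (m : ℚ))) *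
        (∏ m ∈ Finset.Icc 1 (d 0 + d 2), (X 0 + X 2 + Cc (m : ℚ))) *
        ∏ m ∈ Finset.Icc 1 (d 1 + d 2), (X 1 + X 2 + Cc (m : ℚ))) ^ 4 * (den d)⁻¹ := by
  rw [T, den]
  congr 1
  simp [ws, pairs_eq, Fin.sum_univ_three, Cc_zero, Cc_one, Cc_sub, pt]
  ring

lemma euler_mul_T (d : Fin 3 → ℕ) :
    euler (X 0 : R) (X 1) (X 2) * T d =
      euler (pt d 0) (pt d 1) (pt d 2) *
        ((pt d 0 - pt d 1) * (pt d 0 - pt d 2) * (pt d 1 - pt d 2)) * hyp d := by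
  have h01 := mul_prod_Icc (X 0 + X 1) (d 0 + d 1)
  have h02 := mul_prod_Icc (X 0 + X 2) (d 0 + d 2)
  have h12 := mul_prod_Icc (X 1 + X 2) (d 1 + d 2)
  have e02 : ∏ m ∈ Finset.range (d 2 + d 0), ((X 2 : R) + X 0 + Cc (m : ℚ)) =
      ∏ m ∈ Finset.range (d 0 + d 2), (X 0 + X 2 + Cc (m : ℚ)) := by
    rw [add_comm (d 2), add_comm (X 2 : R)]
  have key : ∀ l₁ l₂ l₃ p₁ p₂ p₃ r₁ r₂ r₃ s₁ s₂ s₃ v w : R, l₁ * p₁ = r₁ * s₁ →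
      l₂ * p₂ = r₂ * s₂ → l₃ * p₃ = r₃ * s₃ →
      l₁ ^ 4 * l₂ ^ 4 * l₃ ^ 4 * (v * (p₁ * p₂ * p₃) ^ 4 * w) =
        s₁ ^ 4 * s₂ ^ 4 * s₃ ^ 4 * v * ((r₁ * r₃ * r₂) ^ 4 * w) := by
    intro l₁ l₂ l₃ p₁ p₂ p₃ r₁ r₂ r₃ s₁ s₂ s₃ v w h₁ h₂ h₃
    calc _ = (l₁ * p₁) ^ 4 * (l₂ * p₂) ^ 4 * (l₃ * p₃) ^ 4 * v * w := by ring
      _ = _ := by rw [h₁, h₂, h₃]; ring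
  have hpt : ∀ i j, (X i : R) + X j + Cc ((d i + d j : ℕ) : ℚ) = pt d i + pt d j := by
    intro i j
    rw [pt, pt, Nat.cast_add, Cc_add]
    ring
  rw [hpt] at h01 h02 h12
  simp only [T_eq, hyp, Fin.prod_univ_three, euler, Fin.isValue, zero_add, Fin.reduceAdd, e02]
  exact key _ _ _ _ _ _ _ _ _ _ _ _ _ _ h01 h02 h12

lemma hyp_step (d : Fin 3 → ℕ) (i : Fin 3) :
    pt (d + Pi.single i 1) i ^ 8 * hyp (d + Pi.single i 1) =
      (pt d i + pt d (i + 1)) ^ 4 * (pt d i + pt d (i + 2)) ^ 4 * hyp d := by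
  have hden : den (d + Pi.single i 1) = den d * pt (d + Pi.single i 1) i ^ 8 := by
    fin_cases i <;>
    simp [den, Fin.prod_univ_three, pt, n, Finset.prod_Icc_succ_top] <;> ring
  have hinv : pt (d + Pi.single i 1) i ^ 8 * (den (d + Pi.single i 1))⁻¹ = (den d)⁻¹ := by
    rw [hden, MvPowerSeries.mul_inv_rev, ← mul_assoc, MvPowerSeries.mul_inv_cancel, one_mul]
    simp [pt, Cc]
    positivity
  have hprod : ∏ j, ∏ m ∈ Finset.range ((d + Pi.single i 1 : Fin 3 → ℕ) j +
        (d + Pi.single i 1 : Fin 3 → ℕ) (j + 1)), ((X j : R) + X (j + 1) + Cc (m : ℚ)) =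
      (pt d i + pt d (i + 1)) * (pt d i + pt d (i + 2)) *
        ∏ j, ∏ m ∈ Finset.range (d j + d (j + 1)), (X j + X (j + 1) + Cc (m : ℚ)) := by
    fin_cases i <;>
    simp [Fin.prod_univ_three, pt, ← add_assoc, add_right_comm (d _) 1, Finset.prod_range_succ,
      Cc_add] <;>
    ring
  rw [hyp, mul_left_comm, hinv, hyp, hprod]
  ring

end Telescoping

section Summation

open MvPowerSeries

/-- The exponents `d` with `d₁ + d₂ + d₃ = δ`. -/
def simplex (δ : ℕ) : Finset (Fin 3 → ℕ) :=
  (Fintype.piFinset fun _ : Fin 3 => Finset.range (δ + 1)).filter (fun d => ∑ j, d j = δ)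

lemma mem_simplex {δ : ℕ} {d : Fin 3 → ℕ} : d ∈ simplex δ ↔ ∑ j, d j = δ := by
  simp only [simplex, Finset.mem_filter, Fintype.mem_piFinset, Finset.mem_range,
    and_iff_right_iff_imp]
  rintro rfl j
  exact Nat.lt_succ_of_le (Finset.single_le_sum (fun _ _ => Nat.zero_le _) (Finset.mem_univ j))

lemma sum_simplex_add_single {M : Type} [AddCommMonoid M] (f : (Fin 3 → ℕ) → M) (i : Fin 3)
    (δ : ℕ) :
    ∑ d ∈ simplex δ, f (d + Pi.single i 1) = ∑ d ∈ simplex (δ + 1) with d i ≠ 0, f d := by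
  refine Finset.sum_nbij' (fun d => d + Pi.single i 1) (fun d => d - Pi.single i 1) ?_ ?_ ?_ ?_ ?_
  · intro d hd
    simp only [Finset.mem_filter, mem_simplex] at hd ⊢
    simp [Finset.sum_add_distrib, hd]
  · intro d hd
    simp only [Finset.mem_filter, mem_simplex] at hd ⊢
    obtain ⟨hd, hi⟩ := hd
    have : d - Pi.single i 1 + Pi.single i 1 = d := by
      ext j
      rcases eq_or_ne j i with rfl | hj
      · simp; omega
      · simp [hj]
    have h := congrArg (fun e : Fin 3 → ℕ => ∑ j, e j) this
    simp only [Pi.add_apply, Finset.sum_add_distrib, hd, Finset.sum_pi_single', Finset.mem_univ,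
      if_true] at h
    rw [Fin.sum_univ_three] at h ⊢
    fin_cases i <;> simp at h hi ⊢ <;>
    omega
  · intro d _
    simp
  · intro d hd
    simp only [Finset.mem_filter] at hd
    ext j
    rcases eq_or_ne j i with rfl | hj
    · simp; omega
    · simp [hj]
  · intro d _
    rfl

/-- The ideal `(x₁⁸, x₂⁸, x₃⁸)`. -/
def J : Ideal R := Ideal.span (Set.range fun j : Fin 3 => (X j : R) ^ 8)

/-- The telescoping summand in direction `i`. -/
def summand (k : ℕ) (i : Fin 3) (d : Fin 3 → ℕ) : R :=
  pt d i ^ 8 * altCert k (pt d i) (pt d (i + 1)) (pt d (i + 2)) * hyp d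

/-- The sum of all telescoping summands of degree `δ`. -/
def Z (k δ : ℕ) : R := ∑ i, ∑ d ∈ simplex δ, summand k i d

lemma summand_mem_J {k : ℕ} {i : Fin 3} {d : Fin 3 → ℕ} (h : d i = 0) : summand k i d ∈ J := by
  have : pt d i = X i := by simp [pt, h, Cc_zero]
  rw [summand, this, mul_assoc]
  exact Ideal.mul_mem_right _ _ (Ideal.subset_span ⟨i, rfl⟩)

lemma Z_zero_mem_J (k : ℕ) : Z k 0 ∈ J := by
  refine sum_mem fun i _ => sum_mem fun d hd => summand_mem_J ?_
  simpa using (Finset.sum_eq_zero_iff.mp (mem_simplex.mp hd)) i (Finset.mem_univ i)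

lemma summand_add_single (k : ℕ) (i : Fin 3) (d : Fin 3 → ℕ) :
    summand k i (d + Pi.single i 1) =
      (pt d i + pt d (i + 1)) ^ 4 * (pt d i + pt d (i + 2)) ^ 4 *
        altCert k (pt d i + 1) (pt d (i + 1)) (pt d (i + 2)) * hyp d := by
  have h0 : pt (d + Pi.single i 1) i = pt d i + 1 := by
    simp [pt, Cc_add, Cc_one, add_assoc]
  have h1 : pt (d + Pi.single i 1) (i + 1) = pt d (i + 1) := by simp [pt]
  have h2 : pt (d + Pi.single i 1) (i + 2) = pt d (i + 2) := by simp [pt]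
  have h := hyp_step d i
  rw [summand, h1, h2, mul_right_comm, h, h0]
  ring

lemma mk_sum_summand_add_single (k : ℕ) (i : Fin 3) (δ : ℕ) :
    Ideal.Quotient.mk J (∑ d ∈ simplex δ, summand k i (d + Pi.single i 1)) =
      Ideal.Quotient.mk J (∑ d ∈ simplex (δ + 1), summand k i d) := by
  rw [sum_simplex_add_single, eq_comm, Ideal.Quotient.eq,
    ← Finset.sum_filter_add_sum_filter_not (simplex (δ + 1)) (fun d => d i ≠ 0),
    add_sub_cancel_left]
  refine sum_mem fun d hd => summand_mem_J ?_
  simpa using (Finset.mem_filter.mp hd).2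

lemma sum_pt {δ : ℕ} {d : Fin 3 → ℕ} (hd : d ∈ simplex δ) :
    pt d 0 + pt d 1 + pt d 2 = X 0 + X 1 + X 2 + Cc (δ : ℚ) := by
  rw [mem_simplex, Fin.sum_univ_three] at hd
  simp only [pt, ← hd, Nat.cast_add, Cc_add]
  ring

/-- The recurrence polynomial applied to the term of degree `δ`, times the Euler class. -/
def recTerm (k δ : ℕ) : R :=
  recPoly k (X 0 + X 1 + X 2 + Cc (δ : ℚ)) * euler (X 0) (X 1) (X 2) * F δ

lemma recTerm_eq (k δ : ℕ) :
    recTerm k δ = ∑ d ∈ simplex δ, recPoly k (pt d 0 + pt d 1 + pt d 2) *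
      euler (pt d 0) (pt d 1) (pt d 2) *
        ((pt d 0 - pt d 1) * (pt d 0 - pt d 2) * (pt d 1 - pt d 2)) * hyp d := by
  rw [recTerm, F, Finset.mul_sum]
  refine Finset.sum_congr rfl fun d hd => ?_
  rw [mul_assoc, euler_mul_T, sum_pt hd]
  ring

lemma recTerm_zero (δ : ℕ) : recTerm 0 δ = Z 0 δ := by
  rw [recTerm_eq, Z, Finset.sum_comm]
  refine Finset.sum_congr rfl fun d _ => ?_
  rw [recPoly_zero_mul_euler]
  simp [Fin.sum_univ_three, summand]
  ring

lemma mk_recTerm_succ (k δ : ℕ) :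
    Ideal.Quotient.mk J (recTerm (k + 1) δ) =
      Ideal.Quotient.mk J (Z (k + 1) δ) + Ideal.Quotient.mk J (Z k (δ + 1)) := by
  have h : recTerm (k + 1) δ =
      Z (k + 1) δ + ∑ i, ∑ d ∈ simplex δ, summand k i (d + Pi.single i 1) := by
    rw [recTerm_eq, Z, ← Finset.sum_add_distrib]
    simp only [← Finset.sum_add_distrib]
    rw [Finset.sum_comm]
    refine Finset.sum_congr rfl fun d _ => ?_
    rw [recPoly_succ_mul_euler]
    simp only [summand_add_single]
    simp [Fin.sum_univ_three, summand]
    ring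
  rw [h, map_add, map_sum, Z.eq_1 k, map_sum]
  simp only [mk_sum_summand_add_single]

lemma mk_sum_recTerm (m δ : ℕ) :
    Ideal.Quotient.mk J (∑ k ∈ Finset.range (m + 1), (-1) ^ k * recTerm k (δ + (m - k))) =
      Ideal.Quotient.mk J ((-1) ^ m * Z m δ) := by
  induction m generalizing δ with
  | zero => simp [recTerm_zero]
  | succ m ih =>
    rw [Finset.sum_range_succ, map_add, Finset.sum_congr rfl (g := fun k =>
      (-1) ^ k * recTerm k (δ + 1 + (m - k))), ih]
    · simp only [Nat.sub_self, add_zero, map_mul, mk_recTerm_succ, pow_succ, map_neg, map_one]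
      ring
    · intro k hk
      have := Finset.mem_range.mp hk
      rw [show δ + (m + 1 - k) = δ + 1 + (m - k) by omega]

lemma sum_recTerm_mem_J (N : ℕ) :
    ∑ k ∈ Finset.range (N + 1), (-1) ^ k * recTerm k (N - k) ∈ J := by
  have h := mk_sum_recTerm N 0
  simp only [zero_add] at h
  rw [← Ideal.Quotient.eq_zero_iff_mem, h, Ideal.Quotient.eq_zero_iff_mem]
  exact Ideal.mul_mem_left _ _ (Z_zero_mem_J N)

lemma coeff_eq_zero_of_mem_J {f : R} (hf : f ∈ J) {m : Fin 3 →₀ ℕ} (hm : ∀ j, m j < 8) :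
    coeff m f = 0 := by
  obtain ⟨c, rfl⟩ := Ideal.mem_span_range_iff_exists_fun.mp hf
  rw [map_sum]
  exact Finset.sum_eq_zero fun j _ => X_pow_dvd_iff.mp (Dvd.intro_left _ rfl) m (hm j)

end Summation

section Recurrence

open MvPowerSeries

lemma euler_mul_vandermonde {A : Type} [CommRing A] (a b c : A) :
    ∃ p q r : A, euler a b c * ((a - b) * (a - c) * (b - c)) =
      32 * (a ^ 7 * b ^ 5 * c ^ 3) + a ^ 8 * p + b ^ 6 * q + c ^ 4 * r := by
  refine ⟨
    a ^ 2 * b ^ 5 + 3 * a ^ 2 * b ^ 4 * c + 2 * a ^ 2 * b ^ 3 * c ^ 2 -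
    2 * a ^ 2 * b ^ 2 * c ^ 3 + 12 * a * b ^ 5 * c + 15 * a * b ^ 4 * c ^ 2 +
    33 * b ^ 5 * c ^ 2 + 20 * b ^ 4 * c ^ 3,
    3 * a ^ 9 + 2 * a ^ 8 * b + 15 * a ^ 8 * c - 2 * a ^ 7 * b ^ 2 + 20 * a ^ 7 * c ^ 2 -
    3 * a ^ 6 * b ^ 3 - 15 * a ^ 6 * b ^ 2 * c - 20 * a ^ 6 * b * c ^ 2 - a ^ 5 * b ^ 4 -
    12 * a ^ 5 * b ^ 3 * c - 33 * a ^ 5 * b ^ 2 * c ^ 2 - 32 * a ^ 5 * b * c ^ 3 -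
    3 * a ^ 4 * b ^ 4 * c - 15 * a ^ 4 * b ^ 3 * c ^ 2 - 20 * a ^ 4 * b ^ 2 * c ^ 3 -
    2 * a ^ 3 * b ^ 4 * c ^ 2 + 2 * a ^ 2 * b ^ 4 * c ^ 3,
    (a + b) ^ 4 * (a - b) * (4 * a ^ 3 * b ^ 3 - 6 * a ^ 4 * b ^ 2 - 6 * a ^ 2 * b ^ 4 -
      4 * c * (a ^ 3 * b ^ 2 + a ^ 2 * b ^ 3) + 4 * c ^ 2 * a ^ 2 * b ^ 2 -
      (3 * a + c) * (b + c) ^ 4 * (b - c) -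
      (a ^ 5 + 3 * a ^ 4 * c + 2 * a ^ 3 * c ^ 2 - 2 * a ^ 2 * c ^ 3) * (3 * b + c)), ?_⟩
  rw [euler]
  ring

lemma Vand_eq : Vand = (X 0 - X 1) * (X 0 - X 2) * (X 1 - X 2) := by
  simp [Vand, pairs_eq, mul_assoc]

lemma constantCoeff_eq_zero_of_mem_J {H : R} (hH : euler (X 0) (X 1) (X 2) * Vand * H ∈ J) :
    constantCoeff H = 0 := by
  obtain ⟨p, q, r, h⟩ := euler_mul_vandermonde (X 0 : R) (X 1) (X 2)
  let m : Fin 3 →₀ ℕ := Finsupp.single 0 7 + Finsupp.single 1 5 + Finsupp.single 2 3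
  have hm0 : m 0 = 7 := by simp [m]
  have hm1 : m 1 = 5 := by simp [m]
  have hm2 : m 2 = 3 := by simp [m]
  have h0 : coeff m (X 0 ^ 8 * (p * H)) = 0 :=
    X_pow_dvd_iff.mp (Dvd.intro _ rfl) m (by omega)
  have h1 : coeff m (X 1 ^ 6 * (q * H)) = 0 :=
    X_pow_dvd_iff.mp (Dvd.intro _ rfl) m (by omega)
  have h2 : coeff m (X 2 ^ 4 * (r * H)) = 0 :=
    X_pow_dvd_iff.mp (Dvd.intro _ rfl) m (by omega)
  have hlead : (X 0 : R) ^ 7 * X 1 ^ 5 * X 2 ^ 3 = monomial m 1 := by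
    simp [X_pow_eq, monomial_mul_monomial, m]
  have h3 : coeff m (monomial m 32 * H) = 32 * constantCoeff H := by
    have := coeff_add_monomial_mul m 0 H (32 : ℚ)
    rwa [add_zero, coeff_zero_eq_constantCoeff_apply] at this
  have h4 : (32 : R) * monomial m 1 = monomial m 32 := by
    have := monomial_mul_monomial (0 : Fin 3 →₀ ℕ) m (32 : ℚ) 1
    rw [zero_add, mul_one, monomial_zero_eq_C_apply] at this
    rw [← this, map_ofNat C]
  have key := coeff_eq_zero_of_mem_J hH (m := m) (by
    intro j
    fin_cases j <;> simp [hm0, hm1, hm2])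
  rw [Vand_eq, h, hlead, h4, show (monomial m 32 + X 0 ^ 8 * p + X 1 ^ 6 * q + X 2 ^ 4 * r) * H =
    monomial m 32 * H + X 0 ^ 8 * (p * H) + X 1 ^ 6 * (q * H) + X 2 ^ 4 * (r * H) by ring,
    map_add, map_add, map_add, h0, h1, h2, h3] at key
  linarith

lemma sum_recPoly_mul_constantCoeff {G : ℕ → R} (hG : ∀ δ, F δ = Vand * G δ) (N : ℕ) :
    ∑ k ∈ Finset.range (N + 1),
      (-1) ^ k * recPoly k ((N - k : ℕ) : ℚ) * constantCoeff (G (N - k)) = 0 := by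
  have h : constantCoeff (∑ k ∈ Finset.range (N + 1),
      (-1) ^ k * recPoly k (X 0 + X 1 + X 2 + Cc ((N - k : ℕ) : ℚ)) * G (N - k)) = 0 := by
    apply constantCoeff_eq_zero_of_mem_J
    convert sum_recTerm_mem_J N using 1
    rw [Finset.mul_sum]
    refine Finset.sum_congr rfl fun k _ => ?_
    rw [recTerm, hG]
    ring
  rw [map_sum] at h
  simpa [map_recPoly, Cc] using h

end Recurrence

section Divisibility

open MvPowerSeries

lemma coeff_rename_swap {σ : Type} [Finite σ] [DecidableEq σ] (i j : σ) (f : MvPowerSeries σ ℚ)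
    (m : σ →₀ ℕ) :
    coeff m (rename (Equiv.swap i j) f) = coeff (Finsupp.equivMapDomain (Equiv.swap i j) m) f := by
  have h : m = Finsupp.embDomain (Equiv.swap i j).toEmbedding
      (Finsupp.equivMapDomain (Equiv.swap i j) m) := by
    ext k
    obtain ⟨k, rfl⟩ := (Equiv.swap i j).surjective k
    exact ((Finsupp.embDomain_apply_self _ _ k).trans (by simp)).symm
  conv_lhs => rw [h]
  exact coeff_embDomain_rename (Equiv.swap i j).toEmbedding f _

lemma coeff_X_mul {σ : Type} (i : σ) (g : MvPowerSeries σ ℚ) (m : σ →₀ ℕ) :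
    coeff m (X i * g) = if m i = 0 then 0 else coeff (m - Finsupp.single i 1) g := by
  simp only [X, coeff_monomial_mul, Finsupp.single_le_iff, one_mul, Nat.one_le_iff_ne_zero, ne_eq,
    ite_not]

lemma sum_antidiagonal_eq_zero_of_antisymm {c : ℕ → ℕ → ℚ} (h : ∀ a b, c a b = -c b a) (N : ℕ) :
    ∑ t ∈ Finset.range (N + 1), c t (N - t) = 0 := by
  have h1 := Finset.sum_range_reflect (fun t => c t (N - t)) (N + 1)
  have h2 : ∑ t ∈ Finset.range (N + 1), c (N + 1 - 1 - t) (N - (N + 1 - 1 - t)) =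
      -∑ t ∈ Finset.range (N + 1), c t (N - t) := by
    rw [← Finset.sum_neg_distrib]
    refine Finset.sum_congr rfl fun t ht => ?_
    have := Finset.mem_range.mp ht
    rw [h, show N + 1 - 1 - t = N - t by omega, show N - (N - t) = t by omega]
  linarith

lemma X_sub_X_dvd_sub_rename_swap {σ : Type} [Finite σ] [DecidableEq σ] {i j : σ} (hij : i ≠ j)
    (f : MvPowerSeries σ ℚ) : X i - X j ∣ f - rename (Equiv.swap i j) f := by
  set D := f - rename (Equiv.swap i j) f with hD
  let c : (σ →₀ ℕ) → ℕ → ℕ → ℚ := fun m a b => coeff ((m.update i a).update j b) D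
  have hc : ∀ m a b, c m a b = -c m b a := by
    intro m a b
    have h : ∀ a b, Finsupp.equivMapDomain (Equiv.swap i j) ((m.update i a).update j b) =
        (m.update i b).update j a := by
      intro a b
      ext k
      rw [Finsupp.equivMapDomain_apply, Equiv.symm_swap]
      rcases eq_or_ne k i with rfl | hki
      · simp [Finsupp.update_apply, hij]
      · rcases eq_or_ne k j with rfl | hkj
        · simp [Finsupp.update_apply, hij]
        · simp [Equiv.swap_apply_of_ne_of_ne hki hkj, Finsupp.update_apply, hki, hkj]
    simp only [c, hD, map_sub, coeff_rename_swap, h]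
    ring
  have hself : ∀ m, c m (m i) (m j) = coeff m D := by
    intro m
    simp only [c]
    congr 2
    ext k
    simp only [Finsupp.update_apply]
    split_ifs with h1 h2 <;> simp_all
  have hi : ∀ m, c (m - Finsupp.single i 1) = c m := by
    intro m
    ext a b
    simp only [c]
    congr 2
    ext k
    simp only [Finsupp.update_apply, Finsupp.tsub_apply, Finsupp.single_apply]
    grind
  have hj : ∀ m, c (m - Finsupp.single j 1) = c m := by
    intro m
    ext a b
    simp only [c]
    congr 2
    ext k
    simp only [Finsupp.update_apply, Finsupp.tsub_apply, Finsupp.single_apply]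
    grind
  let g : MvPowerSeries σ ℚ := fun m =>
    ∑ t ∈ Finset.range (m j + 1), c m (m i + 1 + t) (m j - t)
  have hg : ∀ m, coeff m g = ∑ t ∈ Finset.range (m j + 1), c m (m i + 1 + t) (m j - t) :=
    fun _ => rfl
  refine ⟨g, ?_⟩
  ext m
  have hij' : j ≠ i := hij.symm
  rw [← hself, sub_mul, map_sub, coeff_X_mul, coeff_X_mul, hg, hg, hi, hj]
  have hsum := Finset.sum_range_succ' (fun t => c m (m i + t) (m j - t)) (m j)
  simp only [Finsupp.tsub_apply, Finsupp.single_eq_same, Finsupp.single_apply, if_neg hij,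
    if_neg hij', tsub_zero, add_zero] at hsum ⊢
  have hright : (if m j = 0 then 0 else
      ∑ t ∈ Finset.range (m j - 1 + 1), c m (m i + 1 + t) (m j - 1 - t)) =
      ∑ t ∈ Finset.range (m j), c m (m i + (t + 1)) (m j - (t + 1)) := by
    split_ifs with h
    · simp [h]
    · rw [Nat.sub_add_cancel (Nat.one_le_iff_ne_zero.mpr h)]
      refine Finset.sum_congr rfl fun t _ => ?_
      rw [show m i + 1 + t = m i + (t + 1) by omega, show m j - 1 - t = m j - (t + 1) by omega]
  have hleft : (if m i = 0 then 0 else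
      ∑ t ∈ Finset.range (m j + 1), c m (m i - 1 + 1 + t) (m j - t)) =
      ∑ t ∈ Finset.range (m j + 1), c m (m i + t) (m j - t) := by
    split_ifs with h
    · simp only [h, zero_add]
      exact (sum_antidiagonal_eq_zero_of_antisymm (hc m) _).symm
    · rw [Nat.sub_add_cancel (Nat.one_le_iff_ne_zero.mpr h)]
  rw [hleft, hright, hsum]
  ring

lemma Vand_dvd_of_antisymm {f : R} (h₁ : rename (Equiv.swap 0 1) f = -f)
    (h₂ : rename (Equiv.swap 1 2) f = -f) : Vand ∣ f := by
  have e₁ : (Equiv.swap (0 : Fin 3) 1) 2 = 2 := by decide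
  have e₂ : (Equiv.swap (1 : Fin 3) 2) 0 = 0 := by decide
  obtain ⟨h, hh⟩ := X_sub_X_dvd_sub_rename_swap (show (0 : Fin 3) ≠ 1 by decide) f
  obtain ⟨g, hg⟩ := X_sub_X_dvd_sub_rename_swap (show (1 : Fin 3) ≠ 2 by decide) h
  obtain ⟨g', hg'⟩ := X_sub_X_dvd_sub_rename_swap (show (0 : Fin 3) ≠ 1 by decide) g
  rw [h₁] at hh
  have hne : (X 0 - X 1 : R) ≠ 0 := by
    rw [sub_ne_zero, Ne, X_inj]
    decide
  have a₁ := congrArg (rename (Equiv.swap 0 1)) hh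
  have a₂ := congrArg (rename (Equiv.swap 1 2)) hh
  have a₃ := congrArg (rename (Equiv.swap 0 1)) a₂
  have a₄ := congrArg (rename (Equiv.swap 0 1)) hg
  simp only [map_sub, map_neg, map_mul, h₁, h₂, rename_X, Equiv.swap_apply_left,
    Equiv.swap_apply_right, e₁, e₂] at a₁ a₂ a₃ a₄
  have hs : rename (Equiv.swap 0 1) h = h := by
    apply mul_left_cancel₀ hne
    linear_combination a₁ + hh
  rw [hs] at a₄
  have key : 6 * f = Vand * g' := by
    rw [Vand_eq]
    linear_combination hh - a₂ + a₃ + (X 0 - X 2) * hg - (X 1 - X 2) * a₄ +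
      (X 0 - X 2) * (X 1 - X 2) * hg'
  refine ⟨C (1 / 6) * g', ?_⟩
  have h6 : (C (1 / 6) : R) * 6 = 1 := by
    rw [← map_ofNat (C (σ := Fin 3) (R := ℚ)), ← map_mul]
    norm_num
  linear_combination C (1 / 6) * key - f * h6

lemma rename_inv {σ τ : Type} (s : σ ≃ τ) [Finite σ] (a : MvPowerSeries σ ℚ) :
    rename s a⁻¹ = (rename s a)⁻¹ := by
  by_cases h : constantCoeff a = 0
  · rw [MvPowerSeries.inv_eq_zero.mpr h, map_zero, eq_comm, MvPowerSeries.inv_eq_zero,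
      constantCoeff_rename, h]
  · rw [eq_comm, MvPowerSeries.inv_eq_iff_mul_eq_one (by rwa [constantCoeff_rename]), ← map_mul,
      MvPowerSeries.inv_mul_cancel _ h, map_one]

lemma rename_T_swap (d : Fin 3 → ℕ) {i j : Fin 3} (hij : i = 0 ∧ j = 1 ∨ i = 1 ∧ j = 2) :
    rename (Equiv.swap i j) (T d) = -T (d ∘ Equiv.swap i j) := by
  have hden : rename (Equiv.swap i j) (den d) = den (d ∘ Equiv.swap i j) := by
    simp only [den, map_prod, map_pow, map_add, rename_X, Cc, rename_C]
    rw [← Equiv.prod_comp (Equiv.swap i j)]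
    simp
  have e₁ : (Equiv.swap (0 : Fin 3) 1) 2 = 2 := by decide
  have e₂ : (Equiv.swap (1 : Fin 3) 2) 0 = 0 := by decide
  rw [T_eq, T_eq, map_mul, rename_inv, hden, ← neg_mul]
  congr 1
  rcases hij with ⟨rfl, rfl⟩ | ⟨rfl, rfl⟩
  · simp only [map_mul, map_sub, map_add, map_pow, map_prod, pt, Cc, rename_X, rename_C, e₁,
      Equiv.swap_apply_left, Equiv.swap_apply_right, Function.comp_apply]
    rw [add_comm (d 1) (d 0), add_comm (X 1 : R) (X 0)]
    ring
  · simp only [map_mul, map_sub, map_add, map_pow, map_prod, pt, Cc, rename_X, rename_C, e₂,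
      Equiv.swap_apply_left, Equiv.swap_apply_right, Function.comp_apply]
    rw [add_comm (d 2) (d 1), add_comm (X 2 : R) (X 1)]
    ring

lemma rename_F_swap (δ : ℕ) {i j : Fin 3} (hij : i = 0 ∧ j = 1 ∨ i = 1 ∧ j = 2) :
    rename (Equiv.swap i j) (F δ) = -F δ := by
  change rename _ (∑ d ∈ simplex δ, T d) = -∑ d ∈ simplex δ, T d
  simp only [map_sum, rename_T_swap _ hij, Finset.sum_neg_distrib]
  rw [neg_inj]
  refine Finset.sum_nbij' (· ∘ Equiv.swap i j) (· ∘ Equiv.swap i j) (fun d hd => ?_)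
    (fun d hd => ?_) (fun d _ => ?_) (fun d _ => ?_) fun d _ => rfl
  · rw [mem_simplex] at hd ⊢
    rw [← hd]
    exact Equiv.sum_comp (Equiv.swap i j) d
  · rw [mem_simplex] at hd ⊢
    rw [← hd]
    exact Equiv.sum_comp (Equiv.swap i j) d
  · ext k
    simp
  · ext k
    simp

lemma Vand_dvd_F (δ : ℕ) : Vand ∣ F δ :=
  Vand_dvd_of_antisymm (rename_F_swap δ (Or.inl ⟨rfl, rfl⟩)) (rename_F_swap δ (Or.inr ⟨rfl, rfl⟩))

end Divisibility

section DifferentialEquation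

open PowerSeries

lemma coeff_th (f : PowerSeries ℚ) (d : ℕ) : coeff d (th f) = d * coeff d f := by
  simp [th]

lemma recPoly_eq_zero {k : ℕ} (hk : 10 ≤ k) (x : ℚ) : recPoly k x = 0 := by
  obtain ⟨k, rfl⟩ := Nat.exists_eq_add_of_le hk
  rw [add_comm]
  simp [recPoly, recData]

lemma coeff_ofNat_mul (a : ℕ) [a.AtLeastTwo] (f : PowerSeries ℚ) (d : ℕ) :
    coeff d (ofNat(a) * f) = ofNat(a) * coeff d f := by
  rw [← map_ofNat (C (R := ℚ)), coeff_C_mul]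

lemma coeff_X_pow_mul_eq_boole_mul (k : ℕ) (f : PowerSeries ℚ) (d : ℕ) :
    coeff d (X ^ k * f) = (if k ≤ d then 1 else 0) * coeff (d - k) f := by
  rw [coeff_X_pow_mul', boole_mul]

lemma sum_range_ten_eq_zero {G : ℕ → R} (hG : ∀ δ, F δ = Vand * G δ) (N : ℕ) :
    ∑ k ∈ Finset.range 10, (if k ≤ N then 1 else 0) *
      ((-1) ^ k * recPoly k ((N - k : ℕ) : ℚ) * MvPowerSeries.constantCoeff (G (N - k))) = 0 := by
  refine Eq.trans ?_ (sum_recPoly_mul_constantCoeff hG N)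
  simp only [boole_mul]
  rw [← Finset.sum_filter]
  refine Finset.sum_subset_zero_on_sdiff (fun k hk => ?_) (fun k hk => ?_) fun k _ => rfl
  · simp only [Finset.mem_filter, Finset.mem_range] at hk ⊢
    omega
  · simp only [Finset.mem_sdiff, Finset.mem_filter, Finset.mem_range] at hk
    rw [recPoly_eq_zero (by omega), mul_zero, zero_mul]

end DifferentialEquation

/-- every `F_δ` is divisible by the Vandermonde `Δ`, and the series
`I₀ = Σ a_δ q^δ` with `a_δ = (F_δ/Δ)(0)` is annihilated by the stated
Picard–Fuchs operator. -/
theorem stmt_13 :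
    (∀ δ : ℕ, ∃ G : R, F δ = Vand * G) ∧
    (∀ G : ℕ → R, (∀ δ : ℕ, F δ = Vand * G δ) →
      ∀ I₀ : PowerSeries ℚ,
        I₀ = PowerSeries.mk (fun δ => MvPowerSeries.constantCoeff (G δ)) →
        529 * th^[4] I₀ - 23 * PowerSeries.X * (850 * th^[4] I₀ + 1634 * th^[3] I₀ + 1461 * th^[2] I₀ + 644 * th I₀ + 115 * I₀) + PowerSeries.X ^ 2 * (140191 * th^[4] I₀ + 504286 * th^[3] I₀ + 765193 * th^[2] I₀ + 554484 * th I₀ + 160080 * I₀) - 2 * PowerSeries.X ^ 3 * (225598 * th^[4] I₀ + 1145682 * th^[3] I₀ + 2338529 * th^[2] I₀ + 2203584 * th I₀ + 805023 * I₀) + PowerSeries.X ^ 4 * (739023 * th^[4] I₀ + 4533564 * th^[3] I₀ + 11008538 * th^[2] I₀ + 12265136 * th I₀ + 5219792 * I₀) - PowerSeries.X ^ 5 * (683438 * th^[4] I₀ + 4503734 * th^[3] I₀ + 11576207 * th^[2] I₀ + 13658100 * th I₀ + 6109137 * I₀) + PowerSeries.X ^ 6 * (392337 * th^[4] I₀ +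 2558982 * th^[3] I₀ + 6275869 * th^[2] I₀ + 6925308 * th I₀ + 2877864 * I₀) - 4 * PowerSeries.X ^ 7 * (36774 * th^[4] I₀ + 235086 * th^[3] I₀ + 558499 * th^[2] I₀ + 579748 * th I₀ + 221197 * I₀) + 16 * PowerSeries.X ^ 8 * (2081 * th^[4] I₀ + 12548 * th^[3] I₀ + 28814 * th^[2] I₀ + 29364 * th I₀ + 11133 * I₀) - 256 * PowerSeries.X ^ 9 * ((fun g => 2 * th g + 3 * g) ((fun g => 2 * th g + 3 * g) ((fun g => 2 * th g + 3 * g) ((fun g => 2 * th g + 3 * g) (I₀))))) = 0) := by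
  refine ⟨Vand_dvd_F, ?_⟩
  rintro G hG I₀ rfl
  ext N
  have h := sum_range_ten_eq_zero hG N
  simp only [Finset.sum_range_succ, Finset.sum_range_zero, recPoly, recData, List.foldr_cons,
    List.foldr_nil, Nat.zero_le, if_true, Nat.sub_zero, Nat.cast_ofNat, Nat.cast_zero] at h
  have hX := fun f => pow_one (PowerSeries.X : PowerSeries ℚ) ▸ coeff_X_pow_mul_eq_boole_mul 1 f N
  simp only [mul_assoc, map_add, map_sub, coeff_ofNat_mul, coeff_X_pow_mul_eq_boole_mul, hX,
    Function.iterate_succ_apply', Function.iterate_zero_apply, coeff_th, PowerSeries.coeff_mk,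
    map_zero]
  linear_combination h

end Stmt13
end
end
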